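/- For every constant c ≥ 1 there is a constant C such that for all integers n ≥ 2 and f ≥ 2·(log₂ n)² there exists a decoder function D (depending only on n, f, and c) with the following property: for every finite simple graph G = (V,E) on n vertices there exists a finitely supported probability distribution over pairs of labeling functions (L_V : V → {0,1}^{b_V}, L_E : E → {0,1}^{b_E}) with b_V ≤ C·log₂ n and b_E ≤ C·(log₂ n)²·log₂(f/(log₂ n)²), such that for every fixed s,t ∈ V and F ⊆ E with |F| ≤ f, with probability at least 1 − n^{−c} over the random labeling, D applied to (L_V(s), L_V(t), {L_E(e) : e ∈ F}) outputs true if and only if s and t lie in the same connected component of G − F. -/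

import Mathlib

open scoped Classical

/-!
Add edges joining the components of the graph, together with the component representative in each
vertex label; then the graph may be assumed connected. It has a closed walk through all vertices
that uses each edge at most twice, and if the vertices are numbered by their first visit, then the
walk minus a fault set `F` connects each of at most `2 * #F + 1` intervals of numbers. The boundary
of a union of intervals is a sum over `𝔽₂` of prefix sums at the cut points, so a linear sketch of
it can be computed from sketches stored with the faulty edges.

The sketches are used to run Borůvka's algorithm from the partition into intervals. Each round
subsamples the edges at all rates, and fingerprints recognize the boundaries from which a single
edge survives, which happens for a positive proportion of the active classes. The number of active
classes thus decreases geometrically, except with exponentially small probability. It need not be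
brought down to `0`: once `O(log² n)` active classes remain, after `O(log (f / log² n))` rounds,
their unions have at most `2 ^ O(log² n)` boundaries, all nonempty ones of which are detected by a
random checksum of `O(log² n)` bits. One checksum for all unions replaces the remaining rounds.
-/

namespace FaultLabeling

open Finset
open scoped BigOperators

section Probability

variable {Ω Ω' : Type*} [Fintype Ω'] [Fintype Ω]

/-- The probability of the event `p` under the uniform distribution on the finite type `Ω`. -/
noncomputable def prob (p : Ω → Prop) : ℝ := 𝔼 ω, if p ω then 1 else 0

lemma prob_eq_expect (p : Ω → Prop) [DecidablePred p] : prob p = 𝔼 ω, if p ω then 1 else 0 := by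
  unfold prob
  congr! 2

lemma prob_eq_card_div (p : Ω → Prop) [DecidablePred p] :
    prob p = #{ω | p ω} / Fintype.card Ω := by
  rw [prob_eq_expect, Fintype.expect_eq_sum_div_card, sum_boole]

lemma prob_nonneg (p : Ω → Prop) : 0 ≤ prob p :=
  expect_nonneg fun _ _ ↦ by positivity

lemma prob_mono {p q : Ω → Prop} (h : ∀ ω, p ω → q ω) : prob p ≤ prob q :=
  expect_le_expect fun ω _ ↦ by
    by_cases hp : p ω
    · simp [hp, h ω hp]
    · rw [if_neg hp]; positivity

lemma prob_of_forall_not {p : Ω → Prop} (h : ∀ ω, ¬ p ω) : prob p = 0 :=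
  expect_eq_zero fun ω _ ↦ if_neg (h ω)

lemma prob_or_le (p q : Ω → Prop) : prob (fun ω ↦ p ω ∨ q ω) ≤ prob p + prob q := by
  rw [prob, prob, prob, ← expect_add_distrib]
  refine expect_le_expect fun ω _ ↦ ?_
  by_cases hp : p ω <;> by_cases hq : q ω <;> simp [hp, hq]

lemma prob_not [Nonempty Ω] (p : Ω → Prop) : prob (fun ω ↦ ¬ p ω) = 1 - prob p := by
  rw [prob, prob, ← Fintype.expect_one (ι := Ω), ← expect_sub_distrib]
  refine expect_congr rfl fun ω _ ↦ ?_
  by_cases hp : p ω <;> simp [hp]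

lemma prob_exists_le {ι : Type*} (s : Finset ι) (p : ι → Ω → Prop) {ε : ℝ}
    (h : ∀ i ∈ s, prob (p i) ≤ ε) : prob (fun ω ↦ ∃ i ∈ s, p i ω) ≤ #s * ε := by
  have pointwise (ω : Ω) :
      (if ∃ i ∈ s, p i ω then (1 : ℝ) else 0) ≤ ∑ i ∈ s, if p i ω then 1 else 0 := by
    split_ifs with hω
    · obtain ⟨i, hi, hpi⟩ := hω
      exact (if_pos hpi).symm.le.trans
        (single_le_sum (f := fun i ↦ if p i ω then (1 : ℝ) else 0)
          (fun _ _ ↦ by positivity) hi)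
    · positivity
  calc prob (fun ω ↦ ∃ i ∈ s, p i ω)
      ≤ 𝔼 ω, ∑ i ∈ s, (if p i ω then (1 : ℝ) else 0) := by
        rw [prob_eq_expect]
        exact expect_le_expect fun ω _ ↦ pointwise ω
    _ = ∑ i ∈ s, prob (p i) := expect_sum_comm ..
    _ ≤ #s * ε := by simpa using sum_le_card_nsmul s _ ε h

lemma prob_comp_equiv (φ : Ω ≃ Ω') (p : Ω' → Prop) : prob (fun ω ↦ p (φ ω)) = prob p :=
  Fintype.expect_equiv φ _ _ fun _ ↦ rfl

lemma expect_comp_snd [Nonempty Ω] (f : Ω' → ℝ) : 𝔼 ω : Ω × Ω', f ω.2 = 𝔼 ω, f ω := by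
  rw [← univ_product_univ, expect_product]
  exact Fintype.expect_const (ι := Ω) (𝔼 ω, f ω)

lemma expect_comp_fst [Nonempty Ω'] (f : Ω → ℝ) : 𝔼 ω : Ω × Ω', f ω.1 = 𝔼 ω, f ω := by
  rw [← univ_product_univ, expect_product]
  simp only [expect_const univ_nonempty]

lemma prob_comp_fst [Nonempty Ω'] (p : Ω → Prop) : prob (fun ω : Ω × Ω' ↦ p ω.1) = prob p :=
  expect_comp_fst fun ω ↦ if p ω then 1 else 0

lemma prob_comp_snd [Nonempty Ω] (p : Ω' → Prop) : prob (fun ω : Ω × Ω' ↦ p ω.2) = prob p :=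
  expect_comp_snd fun ω ↦ if p ω then 1 else 0

lemma prob_le_of_forall_fst [Nonempty Ω] (p : Ω × Ω' → Prop) {ε : ℝ}
    (h : ∀ x, prob (fun y ↦ p (x, y)) ≤ ε) : prob p ≤ ε := by
  rw [prob, ← univ_product_univ, expect_product]
  exact expect_le univ_nonempty fun x _ ↦ h x

end Probability

section Independence

variable {E X : Type*} [Fintype E] [DecidableEq E] [Fintype X] [Nonempty X]

lemma expect_comp_eval (i : E) (f : X → ℝ) : 𝔼 ω : E → X, f (ω i) = 𝔼 x, f x := by
  rw [Fintype.expect_equiv (Equiv.funSplitAt i X) (fun ω ↦ f (ω i)) (fun z ↦ f z.1) fun _ ↦ rfl,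
    expect_comp_fst]

lemma prob_comp_eval (i : E) (q : X → Prop) : prob (fun ω : E → X ↦ q (ω i)) = prob q :=
  expect_comp_eval i fun x ↦ if q x then 1 else 0

lemma expect_piecewise (D : Finset E) (f : (E → X) → ℝ) :
    𝔼 x, 𝔼 y, f (D.piecewise x y) = 𝔼 x, f x := by
  let exchange (z : (E → X) × (E → X)) := (D.piecewise z.1 z.2, D.piecewise z.2 z.1)
  have exchange_involutive : Function.Involutive exchange := by
    rintro ⟨x, y⟩
    ext i <;> by_cases hi : i ∈ D <;> simp [exchange, hi]
  rw [← expect_comp_fst (Ω' := E → X) f, ← expect_product' _ _ fun x y ↦ f (D.piecewise x y)]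
  exact Fintype.expect_equiv exchange_involutive.toPerm _ _ fun _ ↦ rfl

lemma expect_mul_of_dependsOn {f g : (E → X) → ℝ} {D D' : Finset E} (hD : Disjoint D D')
    (hf : DependsOn f D) (hg : DependsOn g D') : 𝔼 ω, f ω * g ω = (𝔼 ω, f ω) * 𝔼 ω, g ω := by
  rw [← expect_piecewise D, expect_mul_expect]
  refine expect_congr rfl fun x _ ↦ expect_congr rfl fun y _ ↦ ?_
  congr 1
  · exact hf fun i hi ↦ piecewise_eq_of_mem _ _ _ hi
  · exact hg fun i hi ↦ piecewise_eq_of_notMem _ _ _ (disjoint_right.mp hD hi)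

lemma expect_prod_of_dependsOn {α : Type*} {Q : Finset α} {g : α → (E → X) → ℝ}
    {W : α → Finset E} (hW : (Q : Set α).PairwiseDisjoint W)
    (hg : ∀ A ∈ Q, DependsOn (g A) (W A)) : 𝔼 ω, ∏ A ∈ Q, g A ω = ∏ A ∈ Q, 𝔼 ω, g A ω := by
  induction Q using Finset.induction_on with
  | empty => simp
  | insert A Q hA ih =>
    have hWA : Disjoint (W A) (Q.biUnion W) := by
      refine (disjoint_biUnion_right ..).mpr fun B hB ↦ hW (by simp) (by simp [hB]) ?_
      exact (ne_of_mem_of_not_mem hB hA).symm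
    have hgQ : DependsOn (fun ω ↦ ∏ B ∈ Q, g B ω) (Q.biUnion W) := fun x y hxy ↦
      prod_congr rfl fun B hB ↦ hg B (mem_insert_of_mem hB) fun i hi ↦
        hxy i (mem_coe.mpr (mem_biUnion.mpr ⟨B, hB, hi⟩))
    simp only [prod_insert hA]
    rw [expect_mul_of_dependsOn hWA (hg A (mem_insert_self A Q)) hgQ,
      ih (hW.subset (by simp)) fun B hB ↦ hg B (mem_insert_of_mem hB)]

lemma prob_and_of_ne {i j : E} (hij : i ≠ j) (q q' : X → Prop) :
    prob (fun ω : E → X ↦ q (ω i) ∧ q' (ω j)) = prob q * prob q' := by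
  rw [← prob_comp_eval i q, ← prob_comp_eval j q', prob_eq_expect, prob, prob,
    ← expect_mul_of_dependsOn (D := {i}) (D' := {j}) (by simpa using hij)]
  · refine expect_congr rfl fun ω _ ↦ ?_
    rw [ite_zero_mul_ite_zero, one_mul]
  · exact fun x y h ↦ by simp only [h i (by simp)]
  · exact fun x y h ↦ by simp only [h j (by simp)]

lemma prob_le_of_forall_update (i : E) (p : (E → X) → Prop) {ε : ℝ}
    (h : ∀ x, prob (fun y ↦ p (Function.update x i y)) ≤ ε) : prob p ≤ ε := by
  rw [prob, ← expect_piecewise {i}ᶜ]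
  refine expect_le univ_nonempty fun x _ ↦ ?_
  simp only [piecewise_compl, piecewise_singleton]
  exact (prob_comp_eval i fun y ↦ p (Function.update x i y)).trans_le (h x)

/-- Exponential Markov inequality with base `l`, i.e. Chernoff's bound before optimizing `l`. -/
lemma prob_le_card_filter_le {α : Type*} {Q : Finset α} {p : α → (E → X) → Prop}
    [∀ A ω, Decidable (p A ω)] {W : α → Finset E} (hW : (Q : Set α).PairwiseDisjoint W)
    (hp : ∀ A ∈ Q, DependsOn (p A) (W A)) {β l : ℝ} (θ : ℝ) (hl : 1 ≤ l)
    (hβ : ∀ A ∈ Q, prob (p A) ≤ β) :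
    prob (fun ω ↦ θ ≤ #{A ∈ Q | p A ω}) ≤ l ^ (-θ) * (1 + (l - 1) * β) ^ #Q := by
  have hl₀ : 0 < l := by linarith
  let weight (A : α) (ω : E → X) : ℝ := 1 + (l - 1) * if p A ω then 1 else 0
  have prod_weight (ω : E → X) : ∏ A ∈ Q, weight A ω = l ^ (#{A ∈ Q | p A ω} : ℝ) := by
    rw [Real.rpow_natCast, ← prod_const, prod_filter]
    exact prod_congr rfl fun A _ ↦ by simp only [weight]; split_ifs <;> ring
  have expect_weight (A : α) : 𝔼 ω, weight A ω = 1 + (l - 1) * prob (p A) := by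
    rw [expect_add_distrib, Fintype.expect_const, ← mul_expect, prob_eq_expect]
  calc prob (fun ω ↦ θ ≤ #{A ∈ Q | p A ω})
      ≤ 𝔼 ω, l ^ (-θ) * ∏ A ∈ Q, weight A ω := by
        refine expect_le_expect fun ω _ ↦ ?_
        rw [prod_weight, ← Real.rpow_add hl₀]
        split_ifs with hθ
        · exact Real.one_le_rpow hl (by linarith)
        · positivity
    _ = l ^ (-θ) * ∏ A ∈ Q, 𝔼 ω, weight A ω := by
        rw [← mul_expect, expect_prod_of_dependsOn hW]
        exact fun A hA x y hxy ↦ by simp only [weight, hp A hA hxy]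
    _ ≤ l ^ (-θ) * (1 + (l - 1) * β) ^ #Q := by
        simp only [expect_weight]
        rw [← prod_const]
        have hl' : 0 ≤ l - 1 := by linarith
        gcongr with A hA
        · exact fun A _ ↦ add_nonneg zero_le_one (mul_nonneg hl' (prob_nonneg _))
        · exact hβ A hA

end Independence

section SparseSubfamily

variable {ι E : Type*} [DecidableEq ι] [DecidableEq E]

-- Keep each element of `s` with probability `1 / t`.
lemma exists_subset_card_sub_sum_erase [Finite ι] {t : ℕ} [NeZero t] {w : ι → ι → ℝ}
    {s : Finset ι} (hs : ∀ A ∈ s, ∑ B ∈ s.erase A, w A B ≤ 1) :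
    ∃ S ⊆ s, #s / (2 * t) ≤ #S - t / 2 * ∑ A ∈ S, ∑ B ∈ S.erase A, w A B := by
  cases nonempty_fintype ι
  have ht : (0 : ℝ) < t := by exact_mod_cast NeZero.pos t
  have prob_zero : prob (fun x : Fin t ↦ x = 0) = 1 / t := by
    rw [prob_eq_card_div, filter_eq' univ (0 : Fin t)]
    simp
  have prob_eq_zero (A : ι) : prob (fun χ : ι → Fin t ↦ χ A = 0) = 1 / t :=
    (prob_comp_eval A (· = 0)).trans prob_zero
  have prob_pair {A B : ι} (hAB : A ≠ B) :
      prob (fun χ : ι → Fin t ↦ χ A = 0 ∧ χ B = 0) = 1 / t * (1 / t) := by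
    rw [← prob_zero]
    exact prob_and_of_ne hAB (· = 0) (· = 0)
  let score (χ : ι → Fin t) (A : ι) : ℝ := (if χ A = 0 then 1 else 0) -
    t / 2 * ∑ B ∈ s.erase A, w A B * if χ A = 0 ∧ χ B = 0 then 1 else 0
  have le_expect_score (A : ι) (hA : A ∈ s) : 1 / (2 * t) ≤ 𝔼 χ, score χ A := by
    have expect_score : 𝔼 χ, score χ A =
        1 / t - t / 2 * ((∑ B ∈ s.erase A, w A B) * (1 / t * (1 / t))) := by
      rw [expect_sub_distrib, ← prob_eq_expect, prob_eq_zero, ← mul_expect, expect_sum_comm,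
        sum_mul]
      refine congrArg (1 / (t : ℝ) - t / 2 * ·) (sum_congr rfl fun B hB ↦ ?_)
      rw [← mul_expect, ← prob_eq_expect, prob_pair (ne_of_mem_erase hB).symm]
    calc 1 / (2 * (t : ℝ)) = 1 / t - t / 2 * (1 * (1 / t * (1 / t))) := by field_simp; norm_num
      _ ≤ 𝔼 χ, score χ A := by rw [expect_score]; gcongr; exact hs A hA
  obtain ⟨χ, -, hχ⟩ : ∃ χ ∈ univ, #s / (2 * t) ≤ ∑ A ∈ s, score χ A := by
    refine exists_le_of_le_expect univ_nonempty ?_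
    rw [expect_sum_comm]
    simpa [div_eq_mul_inv] using sum_le_sum le_expect_score
  refine ⟨{A ∈ s | χ A = 0}, filter_subset _ _, hχ.trans_eq ?_⟩
  rw [sum_sub_distrib, sum_boole, ← mul_sum, sum_filter]
  refine congrArg (#{A ∈ s | χ A = 0} - t / 2 * · : ℝ → ℝ) (sum_congr rfl fun A _ ↦ ?_)
  by_cases hA : χ A = 0 <;> simp [hA, ← filter_erase, sum_filter]

-- Markov's inequality: `1 - (t / 2) * x ≤ 1_{x ≤ 2 / t}`.
lemma exists_subset_sum_erase_le [Finite ι] {t : ℕ} [NeZero t] {w : ι → ι → ℝ}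
    (hw : ∀ A B, 0 ≤ w A B) {s : Finset ι} (hs : ∀ A ∈ s, ∑ B ∈ s.erase A, w A B ≤ 1) :
    ∃ Q ⊆ s, #s ≤ 2 * t * #Q ∧ ∀ A ∈ Q, ∑ B ∈ Q.erase A, w A B ≤ 2 / t := by
  have ht : (0 : ℝ) < t := by exact_mod_cast NeZero.pos t
  obtain ⟨S, hSs, hS⟩ := exists_subset_card_sub_sum_erase (t := t) hs
  let load (A : ι) : ℝ := ∑ B ∈ S.erase A, w A B
  have load_nonneg (A : ι) : 0 ≤ load A := sum_nonneg fun B _ ↦ hw A B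
  refine ⟨{A ∈ S | load A ≤ 2 / t}, (filter_subset _ _).trans hSs, ?_, fun A hA ↦ ?_⟩
  · have hcard : #S - t / 2 * ∑ A ∈ S, load A ≤ #{A ∈ S | load A ≤ 2 / t} := by
      rw [card_eq_sum_ones, card_filter, mul_sum]
      push_cast
      rw [← sum_sub_distrib]
      refine sum_le_sum fun A _ ↦ ?_
      split_ifs with hA
      · linarith [mul_nonneg (half_pos ht).le (load_nonneg A)]
      · rw [not_le, div_lt_iff₀ ht] at hA
        linarith
    have := (div_le_iff₀ (by positivity)).mp (hS.trans hcard)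
    exact_mod_cast this.trans_eq (mul_comm _ _)
  · exact (sum_le_sum_of_subset_of_nonneg (erase_subset_erase _ (filter_subset _ _))
      fun B _ _ ↦ hw A B).trans (mem_filter.mp hA).2

lemma sum_erase_card_inter_le {D : ι → Finset E} {s : Finset ι}
    (hD : ∀ e, #{A ∈ s | e ∈ D A} ≤ 2) {A : ι} (hA : A ∈ s) :
    ∑ B ∈ s.erase A, #(D A ∩ D B) ≤ #(D A) := by
  have card_inter (B : ι) : #(D A ∩ D B) = ∑ e ∈ D A, if e ∈ D B then 1 else 0 := by
    rw [← card_filter, filter_mem_eq_inter]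
  simp only [card_inter]
  rw [sum_comm, card_eq_sum_ones]
  refine sum_le_sum fun e he ↦ ?_
  rw [← card_filter, filter_erase, card_erase_of_mem (mem_filter.mpr ⟨hA, he⟩)]
  exact Nat.sub_le_of_le_add (hD e)

-- The first of the at most two members containing an edge owns it.
lemma exists_pairwiseDisjoint_own_rest [Countable ι] {D : ι → Finset E} {Q : Finset ι}
    (hD : ∀ e, #{A ∈ Q | e ∈ D A} ≤ 2) :
    ∃ own rest : ι → Finset E, (∀ A, own A ∪ rest A = D A) ∧ (Q : Set ι).PairwiseDisjoint own ∧
      (Q : Set ι).PairwiseDisjoint rest ∧ ∀ A, rest A ⊆ (Q.erase A).biUnion fun B ↦ D A ∩ D B := by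
  obtain ⟨rank, rank_injective⟩ := Countable.exists_injective_nat ι
  let IsFirst (A : ι) (e : E) : Prop := ∀ B ∈ Q, e ∈ D B → rank A ≤ rank B
  refine ⟨fun A ↦ {e ∈ D A | IsFirst A e}, fun A ↦ {e ∈ D A | ¬ IsFirst A e},
    fun A ↦ filter_union_filter_not_eq _ _,
    fun A hA B hB hAB ↦ disjoint_left.mpr fun e heA heB ↦ ?_,
    fun A hA B hB hAB ↦ disjoint_left.mpr fun e heA heB ↦ ?_, fun A e he ↦ ?_⟩
  · rw [mem_filter] at heA heB
    exact hAB (rank_injective ((heA.2 B hB heB.1).antisymm (heB.2 A hA heA.1)))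
  · simp only [mem_filter, IsFirst, not_forall, not_le] at heA heB
    obtain ⟨heA, C, hC, heC, hCA⟩ := heA
    obtain ⟨heB, C', hC', heC', hCB⟩ := heB
    have hmem {F : ι} (hF : F ∈ Q) (heF : e ∈ D F) : F = A ∨ F = B := by
      by_contra! hne
      exact (hD e).not_gt (two_lt_card_iff.mpr ⟨F, A, B, by simp_all⟩)
    grind
  · simp only [mem_filter, IsFirst, not_forall, not_le] at he
    obtain ⟨heA, C, hC, heC, hCA⟩ := he
    exact mem_biUnion.mpr ⟨C, mem_erase.mpr ⟨fun h ↦ hCA.ne (congrArg rank h), hC⟩,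
      mem_inter.mpr ⟨heA, heC⟩⟩

lemma exists_subset_own_rest {α : Type*} [Finite α] (t : ℕ) [NeZero t] {D : α → Finset E}
    {s : Finset α} (hne : ∀ A ∈ s, (D A).Nonempty) (hD : ∀ e, #{A ∈ s | e ∈ D A} ≤ 2) :
    ∃ Q ⊆ s, #s ≤ 2 * t * #Q ∧ ∃ own rest : α → Finset E, (∀ A, own A ∪ rest A = D A) ∧
      (Q : Set α).PairwiseDisjoint own ∧ (Q : Set α).PairwiseDisjoint rest ∧
      ∀ A ∈ Q, t * #(rest A) ≤ 2 * #(D A) := by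
  have ht : (0 : ℝ) < t := by exact_mod_cast NeZero.pos t
  obtain ⟨Q, hQs, hcard, hQ⟩ := exists_subset_sum_erase_le (t := t)
    (w := fun A B ↦ (#(D A ∩ D B) : ℝ) / #(D A)) (fun _ _ ↦ by positivity) (s := s)
    fun A hA ↦ by
      rw [← sum_div, div_le_one (by exact_mod_cast (hne A hA).card_pos)]
      exact_mod_cast sum_erase_card_inter_le hD hA
  obtain ⟨own, rest, hunion, hown, hrest, hsub⟩ := exists_pairwiseDisjoint_own_rest (D := D)
    fun e ↦ (card_le_card (filter_subset_filter _ hQs)).trans (hD e)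
  refine ⟨Q, hQs, hcard, own, rest, hunion, hown, hrest, fun A hA ↦ ?_⟩
  have hDA : (0 : ℝ) < #(D A) := by exact_mod_cast (hne A (hQs hA)).card_pos
  have hoverlap : ((∑ B ∈ Q.erase A, #(D A ∩ D B) : ℕ) : ℝ) * t ≤ 2 * #(D A) := by
    rw [← div_le_div_iff₀ hDA ht, Nat.cast_sum, sum_div]
    exact hQ A hA
  have hcardRest : (#(rest A) : ℝ) ≤ ∑ B ∈ Q.erase A, #(D A ∩ D B) := by
    exact_mod_cast (card_le_card (hsub A)).trans card_biUnion_le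
  have : (t : ℝ) * #(rest A) ≤ 2 * #(D A) := by
    rw [mul_comm]
    exact (mul_le_mul_of_nonneg_right hcardRest ht.le).trans hoverlap
  exact_mod_cast this

end SparseSubfamily

section Sampling

variable {E : Type*} {L : ℕ}

/-- The elements of `W` surviving the subsampling at level `j`, which has rate `2 ^ j / 2 ^ L`; the
same uniform `ω` is used at all levels. -/
def sample (ω : E → Fin (2 ^ L)) (j : ℕ) (W : Finset E) : Finset E := {e ∈ W | (ω e : ℕ) < 2 ^ j}

/-- Some level of the subsampling given by `ω` leaves exactly the element `e` of `W`. -/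
def Isolates (ω : E → Fin (2 ^ L)) (W : Finset E) (e : E) : Prop := ∃ j < L, sample ω j W = {e}

lemma sample_subset (ω : E → Fin (2 ^ L)) (j : ℕ) (W : Finset E) : sample ω j W ⊆ W :=
  filter_subset _ _

lemma sample_union [DecidableEq E] (ω : E → Fin (2 ^ L)) (j : ℕ) (W W' : Finset E) :
    sample ω j (W ∪ W') = sample ω j W ∪ sample ω j W' :=
  filter_union _ _ _

lemma dependsOn_sample (j : ℕ) (W : Finset E) :
    DependsOn (fun ω : E → Fin (2 ^ L) ↦ sample ω j W) W :=
  fun _ _ h ↦ filter_congr fun e he ↦ by rw [h e he]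

lemma exists_sample_rate {d : ℕ} (hd : 0 < d) (hL : 2 * d ≤ 2 ^ L) :
    ∃ j < L, (d * (2 ^ j / 2 ^ L) : ℝ) ∈ Set.Icc (1 / 4) (1 / 2) := by
  let Fits (j : ℕ) : Prop := d * 2 ^ (j + 1) ≤ 2 ^ L
  have lt_of_fits {j : ℕ} (hj : Fits j) : j < L :=
    (Nat.pow_le_pow_iff_right one_lt_two).mp ((Nat.le_mul_of_pos_left _ hd).trans hj)
  let j := Nat.findGreatest Fits L
  have hj : Fits j := Nat.findGreatest_spec (Nat.zero_le L) (by simpa [Fits, mul_comm] using hL)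
  have hj' : ¬ Fits (j + 1) := fun h ↦
    (Nat.le_findGreatest (lt_of_fits h).le h).not_gt (Nat.lt_succ_self j)
  refine ⟨j, lt_of_fits hj, ?_, ?_⟩
  · have : (2 ^ L : ℝ) < d * 2 ^ (j + 1 + 1) := by exact_mod_cast not_le.mp hj'
    rw [mul_div_assoc', le_div_iff₀ (by positivity)]
    rw [pow_succ, pow_succ] at this
    linarith
  · have : (d * 2 ^ (j + 1) : ℝ) ≤ 2 ^ L := by exact_mod_cast hj
    rw [mul_div_assoc', div_le_iff₀ (by positivity)]
    rw [pow_succ] at this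
    linarith

variable [Fintype E] [DecidableEq E]

lemma prob_lt_two_pow {j : ℕ} (hj : j ≤ L) :
    prob (fun x : Fin (2 ^ L) ↦ (x : ℕ) < 2 ^ j) = 2 ^ j / 2 ^ L := by
  rw [prob_eq_card_div, Fin.card_filter_val_lt, min_eq_right (Nat.pow_le_pow_right two_pos hj)]
  simp

lemma prob_sample_nonempty_le {j : ℕ} (hj : j ≤ L) (W : Finset E) :
    prob (fun ω : E → Fin (2 ^ L) ↦ (sample ω j W).Nonempty) ≤ #W * (2 ^ j / 2 ^ L) := by
  refine (prob_mono fun ω hω ↦ ?_).trans <|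
    prob_exists_le W (fun e ω ↦ (ω e : ℕ) < 2 ^ j) fun e _ ↦
      ((prob_comp_eval e fun x : Fin (2 ^ L) ↦ (x : ℕ) < 2 ^ j).trans (prob_lt_two_pow hj)).le
  exact filter_nonempty_iff.mp hω

lemma expect_card_sample {j : ℕ} (hj : j ≤ L) (W : Finset E) :
    𝔼 ω : E → Fin (2 ^ L), (#(sample ω j W) : ℝ) = #W * (2 ^ j / 2 ^ L) := by
  simp only [sample, ← sum_boole, expect_sum_comm, ← prob_eq_expect]
  rw [sum_congr rfl fun e _ ↦ prob_comp_eval e fun x : Fin (2 ^ L) ↦ (x : ℕ) < 2 ^ j]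
  simp [prob_lt_two_pow hj]

lemma expect_card_sample_sq_le {j : ℕ} (hj : j ≤ L) (W : Finset E) :
    𝔼 ω : E → Fin (2 ^ L), (#(sample ω j W) : ℝ) ^ 2 ≤
      #W * (2 ^ j / 2 ^ L) + (#W * (2 ^ j / 2 ^ L)) ^ 2 := by
  set p : ℝ := 2 ^ j / 2 ^ L
  let q (x : Fin (2 ^ L)) : Prop := (x : ℕ) < 2 ^ j
  have prob_pair_le (e e' : E) : prob (fun ω : E → Fin (2 ^ L) ↦ q (ω e) ∧ q (ω e')) ≤
      (if e = e' then p else 0) + p ^ 2 := by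
    rcases eq_or_ne e e' with rfl | hne
    · rw [if_pos rfl]
      simp only [and_self]
      rw [prob_comp_eval, prob_lt_two_pow hj]
      exact le_add_of_nonneg_right (sq_nonneg p)
    · rw [prob_and_of_ne hne, prob_lt_two_pow hj, if_neg hne]
      exact (zero_add (p ^ 2)).symm ▸ (sq p).ge
  calc 𝔼 ω : E → Fin (2 ^ L), (#(sample ω j W) : ℝ) ^ 2
      = ∑ e ∈ W, ∑ e' ∈ W, prob (fun ω : E → Fin (2 ^ L) ↦ q (ω e) ∧ q (ω e')) := by
        simp only [sample, ← sum_boole, sq, sum_mul_sum, ite_zero_mul_ite_zero, one_mul,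
          expect_sum_comm, ← prob_eq_expect]
        rfl
    _ ≤ ∑ e ∈ W, ∑ e' ∈ W, ((if e = e' then p else 0) + p ^ 2) :=
        sum_le_sum fun e _ ↦ sum_le_sum fun e' _ ↦ prob_pair_le e e'
    _ = #W * p + (#W * p) ^ 2 := by
        simp only [sum_add_distrib, sum_ite_eq, sum_const, nsmul_eq_mul, sum_ite_mem, inter_self]
        ring

-- Second moment: `2 * N - N ^ 2 ≤ 1_{N = 1}` for the number `N` of survivors.
lemma prob_card_sample_ne_one_le {j : ℕ} (hj : j ≤ L) {W : Finset E}
    (hW : (#W * (2 ^ j / 2 ^ L) : ℝ) ∈ Set.Icc (1 / 8) (1 / 2)) :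
    prob (fun ω : E → Fin (2 ^ L) ↦ #(sample ω j W) ≠ 1) ≤ 15 / 16 := by
  have pointwise (N : ℕ) : (2 * N - N ^ 2 : ℝ) ≤ if N = 1 then 1 else 0 := by
    rcases Nat.lt_or_ge N 2 with hN | hN
    · interval_cases N <;> norm_num
    · have : (2 : ℝ) ≤ N := by exact_mod_cast hN
      rw [if_neg (by omega)]
      nlinarith
  have one_sixteenth_le : 1 / 16 ≤ prob (fun ω : E → Fin (2 ^ L) ↦ #(sample ω j W) = 1) := by
    set x : ℝ := #W * (2 ^ j / 2 ^ L)
    calc 1 / 16 ≤ 2 * x - (x + x ^ 2) := by nlinarith [hW.1, hW.2]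
      _ ≤ 2 * (𝔼 ω : E → Fin (2 ^ L), (#(sample ω j W) : ℝ)) -
          𝔼 ω : E → Fin (2 ^ L), (#(sample ω j W) : ℝ) ^ 2 := by
          rw [expect_card_sample hj]
          exact sub_le_sub_left (expect_card_sample_sq_le hj W) _
      _ = 𝔼 ω : E → Fin (2 ^ L), (2 * (#(sample ω j W) : ℝ) - (#(sample ω j W) : ℝ) ^ 2) := by
          rw [expect_sub_distrib, mul_expect]
      _ ≤ prob (fun ω : E → Fin (2 ^ L) ↦ #(sample ω j W) = 1) := by
          rw [prob_eq_expect]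
          exact expect_le_expect fun ω _ ↦ pointwise _
  rw [prob_not]
  linarith

end Sampling

section Isolation

variable {α E : Type*} [DecidableEq E] {L : ℕ}

lemma exists_isolates_of_card_sample_eq_one {ω : E → Fin (2 ^ L)} {j : ℕ} (hj : j < L)
    {own rest : Finset E} (hown : #(sample ω j own) = 1) (hrest : ¬ (sample ω j rest).Nonempty) :
    ∃ e, Isolates ω (own ∪ rest) e := by
  obtain ⟨e, he⟩ := card_eq_one.mp hown
  exact ⟨e, j, hj, by rw [sample_union, he, not_nonempty_iff_eq_empty.mp hrest, union_empty]⟩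

/-- The guaranteed proportion of isolated boundaries in one round. -/
noncomputable def isolationRate : ℝ := 1 / (2 ^ 256 * 2 ^ 8)

lemma isolationRate_pos : 0 < isolationRate := by unfold isolationRate; positivity

lemma isolationRate_le_one : isolationRate ≤ 1 := by unfold isolationRate; norm_num

lemma exists_sample_rates {s : Finset α} {D own rest : α → Finset E}
    (hne : ∀ A ∈ s, (D A).Nonempty) (hL : ∀ A ∈ s, 2 * #(D A) ≤ 2 ^ L)
    (hD : ∀ A, own A ∪ rest A = D A) (hrest : ∀ A ∈ s, 2 ^ 256 * #(rest A) ≤ 2 * #(D A)) :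
    ∃ level : α → ℕ, ∀ A ∈ s, level A < L ∧
      (#(own A) * (2 ^ level A / 2 ^ L) : ℝ) ∈ Set.Icc (1 / 8) (1 / 2) ∧
      (#(rest A) * (2 ^ level A / 2 ^ L) : ℝ) ≤ 1 / 2 ^ 256 := by
  choose! level hlevel hrate using fun A hA ↦ exists_sample_rate (hne A hA).card_pos (hL A hA)
  refine ⟨level, fun A hA ↦ ⟨hlevel A hA, ?_⟩⟩
  set p : ℝ := 2 ^ level A / 2 ^ L
  have hp : 0 ≤ p := by positivity
  have hrestp : #(rest A) * p ≤ 1 / 2 ^ 256 := by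
    have : (2 ^ 256 * #(rest A) : ℝ) ≤ 2 * #(D A) := by exact_mod_cast hrest A hA
    rw [le_div_iff₀ (by positivity)]
    linarith [mul_le_mul_of_nonneg_right this hp, (hrate A hA).2]
  have hownp : (#(own A) * p : ℝ) ≤ #(D A) * p := by
    gcongr
    exact hD A ▸ subset_union_left
  have hDp : (#(D A) * p : ℝ) ≤ #(own A) * p + #(rest A) * p := by
    rw [← add_mul]
    gcongr
    exact_mod_cast hD A ▸ card_union_le (own A) (rest A)
  have : (1 / 2 ^ 256 : ℝ) ≤ 1 / 8 := by norm_num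
  exact ⟨⟨by linarith [(hrate A hA).1], hownp.trans (hrate A hA).2⟩, hrestp⟩

variable [Fintype E]

lemma prob_many_card_sample_ne_one_le {Q : Finset α} {own : α → Finset E} {level : α → ℕ}
    (hown : (Q : Set α).PairwiseDisjoint own) (hlevel : ∀ A ∈ Q, level A ≤ L)
    (hrate : ∀ A ∈ Q, (#(own A) * (2 ^ level A / 2 ^ L) : ℝ) ∈ Set.Icc (1 / 8) (1 / 2)) :
    prob (fun ω : E → Fin (2 ^ L) ↦
      63 / 64 * (#Q : ℝ) ≤ #{A ∈ Q | #(sample ω (level A) (own A)) ≠ 1}) ≤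
      2 ^ (-(#Q / 128 : ℝ)) := by
  have base_le : (1 + (2 - 1) * (15 / 16) : ℝ) ≤ 2 ^ (31 / 32 : ℝ) := by
    refine le_of_pow_le_pow_left₀ (n := 32) (by norm_num) (by positivity) ?_
    rw [← Real.rpow_natCast (2 ^ (31 / 32 : ℝ)), ← Real.rpow_mul zero_le_two]
    norm_num
  calc _ ≤ (2 : ℝ) ^ (-(63 / 64 * (#Q : ℝ))) * (1 + (2 - 1) * (15 / 16)) ^ #Q :=
        prob_le_card_filter_le hown (fun A _ x y h ↦ by
          simp only [dependsOn_sample (level A) (own A) h]) _ one_le_two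
          fun A hA ↦ prob_card_sample_ne_one_le (hlevel A hA) (hrate A hA)
    _ ≤ 2 ^ (-(63 / 64 * (#Q : ℝ))) * (2 ^ (31 / 32 : ℝ)) ^ #Q := by gcongr
    _ = 2 ^ (-(63 / 64 * (#Q : ℝ)) + 31 / 32 * #Q) := by
        rw [← Real.rpow_natCast, ← Real.rpow_mul zero_le_two, ← Real.rpow_add two_pos]
    _ ≤ 2 ^ (-(#Q / 128 : ℝ)) := by
        refine Real.rpow_le_rpow_of_exponent_le one_le_two ?_
        linarith [(#Q).cast_nonneg (α := ℝ)]

lemma prob_many_sample_nonempty_le {Q : Finset α} {rest : α → Finset E} {level : α → ℕ}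
    (hrest : (Q : Set α).PairwiseDisjoint rest) (hlevel : ∀ A ∈ Q, level A ≤ L)
    (hrate : ∀ A ∈ Q, (#(rest A) * (2 ^ level A / 2 ^ L) : ℝ) ≤ 1 / 2 ^ 256) :
    prob (fun ω : E → Fin (2 ^ L) ↦
      (#Q / 128 : ℝ) ≤ #{A ∈ Q | (sample ω (level A) (rest A)).Nonempty}) ≤
      2 ^ (-(#Q / 128 : ℝ)) := by
  calc _ ≤ ((2 : ℝ) ^ 256) ^ (-(#Q / 128 : ℝ)) * (1 + (2 ^ 256 - 1) * (1 / 2 ^ 256)) ^ #Q :=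
        prob_le_card_filter_le hrest (fun A _ x y h ↦ by
          simp only [dependsOn_sample (level A) (rest A) h]) _ (by norm_num)
          fun A hA ↦ (prob_sample_nonempty_le (hlevel A hA) _).trans (hrate A hA)
    _ ≤ ((2 : ℝ) ^ 256) ^ (-(#Q / 128 : ℝ)) * 2 ^ #Q := by gcongr; norm_num
    _ = 2 ^ (256 * -(#Q / 128 : ℝ) + #Q) := by
        rw [← Real.rpow_natCast, ← Real.rpow_mul zero_le_two, ← Real.rpow_natCast 2 #Q,
          ← Real.rpow_add two_pos]
        norm_num
    _ ≤ 2 ^ (-(#Q / 128 : ℝ)) := by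
        refine Real.rpow_le_rpow_of_exponent_le one_le_two ?_
        linarith [(#Q).cast_nonneg (α := ℝ)]

lemma prob_few_isolates_le [Finite α] {s : Finset α} {D : α → Finset E}
    (hne : ∀ A ∈ s, (D A).Nonempty) (hD : ∀ e, #{A ∈ s | e ∈ D A} ≤ 2)
    (hL : ∀ A ∈ s, 2 * #(D A) ≤ 2 ^ L) :
    prob (fun ω : E → Fin (2 ^ L) ↦
      (#{A ∈ s | ∃ e, Isolates ω (D A) e} : ℝ) < isolationRate * #s) ≤
      2 * 2 ^ (-(isolationRate * #s)) := by
  obtain ⟨Q, hQs, hcard, own, rest, hunion, hown, hrest, hrestCard⟩ :=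
    exists_subset_own_rest (2 ^ 256) hne hD
  obtain ⟨level, hlevel⟩ := exists_sample_rates (fun A hA ↦ hne A (hQs hA))
    (fun A hA ↦ hL A (hQs hA)) hunion hrestCard
  have hrate : isolationRate * #s ≤ #Q / 128 := by
    have : (#s : ℝ) ≤ 2 * 2 ^ 256 * #Q := by exact_mod_cast hcard
    unfold isolationRate
    linarith
  have few_isolates (ω : E → Fin (2 ^ L))
      (hω : (#{A ∈ s | ∃ e, Isolates ω (D A) e} : ℝ) < isolationRate * #s) :
      63 / 64 * (#Q : ℝ) ≤ #{A ∈ Q | #(sample ω (level A) (own A)) ≠ 1} ∨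
      (#Q / 128 : ℝ) ≤ #{A ∈ Q | (sample ω (level A) (rest A)).Nonempty} := by
    have cover : Q ⊆ {A ∈ s | ∃ e, Isolates ω (D A) e} ∪
        ({A ∈ Q | #(sample ω (level A) (own A)) ≠ 1} ∪
          {A ∈ Q | (sample ω (level A) (rest A)).Nonempty}) := fun A hA ↦ by
      by_contra hA'
      simp only [mem_union, mem_filter, hA, hQs hA, true_and, not_or, not_not] at hA'
      exact hA'.1 (hunion A ▸ exists_isolates_of_card_sample_eq_one (hlevel A hA).1 hA'.2.1 hA'.2.2)
    have : (#Q : ℝ) ≤ #{A ∈ s | ∃ e, Isolates ω (D A) e} +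
        (#{A ∈ Q | #(sample ω (level A) (own A)) ≠ 1} +
        #{A ∈ Q | (sample ω (level A) (rest A)).Nonempty}) := by
      exact_mod_cast (card_le_card cover).trans <| (card_union_le _ _).trans <|
        Nat.add_le_add_left (card_union_le _ _) _
    by_contra! h
    linarith
  calc _ ≤ (2 : ℝ) ^ (-(#Q / 128 : ℝ)) + 2 ^ (-(#Q / 128 : ℝ)) :=
        (prob_mono few_isolates).trans <| (prob_or_le _ _).trans <| add_le_add
          (prob_many_card_sample_ne_one_le hown (fun A hA ↦ (hlevel A hA).1.le)
            fun A hA ↦ (hlevel A hA).2.1)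
          (prob_many_sample_nonempty_le hrest (fun A hA ↦ (hlevel A hA).1.le)
            fun A hA ↦ (hlevel A hA).2.2)
    _ ≤ 2 * 2 ^ (-(isolationRate * #s)) := by
        rw [← two_mul]
        gcongr
        exact one_le_two

end Isolation

section Boruvka

lemma two_mul_card_image_add_card_le {α β : Type*} [DecidableEq β] {s S : Finset α} {g : α → β}
    (hS : S ⊆ s) (h : ∀ a ∈ S, ∃ b ∈ s, b ≠ a ∧ g b = g a) : 2 * #(s.image g) + #S ≤ 2 * #s := by
  have fiber_le (b : β) (hb : b ∈ s.image g) : 2 + #{a ∈ S | g a = b} ≤ 2 * #{a ∈ s | g a = b} := by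
    have hle : #{a ∈ S | g a = b} ≤ #{a ∈ s | g a = b} := card_le_card (filter_subset_filter _ hS)
    rcases eq_empty_or_nonempty {a ∈ S | g a = b} with hempty | ⟨a, ha⟩
    · obtain ⟨a, ha, hab⟩ := mem_image.mp hb
      have : 0 < #{a ∈ s | g a = b} := card_pos.mpr ⟨a, mem_filter.mpr ⟨ha, hab⟩⟩
      simp only [hempty, card_empty]
      omega
    · obtain ⟨haS, hab⟩ := mem_filter.mp ha
      obtain ⟨a', ha's, hne, ha'⟩ := h a haS
      have : 1 < #{a ∈ s | g a = b} := one_lt_card.mpr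
        ⟨a', mem_filter.mpr ⟨ha's, ha'.trans hab⟩, a, mem_filter.mpr ⟨hS haS, hab⟩, hne⟩
      omega
  calc 2 * #(s.image g) + #S = ∑ b ∈ s.image g, (2 + #{a ∈ S | g a = b}) := by
        rw [sum_add_distrib, sum_const, smul_eq_mul, mul_comm,
          card_eq_sum_card_fiberwise fun a ha ↦ mem_image_of_mem g (hS ha)]
    _ ≤ ∑ b ∈ s.image g, 2 * #{a ∈ s | g a = b} := sum_le_sum fiber_le
    _ = 2 * #s := by
        rw [← mul_sum, ← card_eq_sum_card_fiberwise fun a ha ↦ mem_image_of_mem g ha]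

variable {V : Type*} [Fintype V] {H : SimpleGraph V} {r r' : Setoid V} {U : Finset V} {u v : V}

/-- The edges of `H` with exactly one endpoint in `U`. -/
noncomputable def boundary (H : SimpleGraph V) (U : Finset V) : Finset (Sym2 V) :=
  {e | ∃ a ∈ U, ∃ b ∉ U, H.Adj a b ∧ e = s(a, b)}

/-- The equivalence class of `v`. -/
noncomputable def classOf (r : Setoid V) (v : V) : Finset V := {u | r u v}

/-- The classes of `r` with an `H`-edge to another class. -/
noncomputable def active (H : SimpleGraph V) (r : Setoid V) : Finset (Finset V) :=
  ({a | ∃ b, H.Adj a b ∧ ¬ r a b} : Finset V).image (classOf r)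

/-- One round of Borůvka's algorithm: merge along the edges `e` that are selected by the class `A`
in the sense that `P A e`. -/
noncomputable def merge (P : Finset V → Sym2 V → Prop) (r : Setoid V) : Setoid V :=
  r ⊔ Relation.EqvGen.setoid fun u v ↦ ∃ w, P (classOf r w) s(u, v)

/-- The partitions produced by Borůvka's algorithm, where `P k A e` says that class `A` selects the
edge `e` in round `k`. -/
noncomputable def boruvka {R : ℕ} (P : Fin R → Finset V → Sym2 V → Prop) (r₀ : Setoid V) :
    Fin (R + 1) → Setoid V :=
  Fin.induction r₀ fun k r ↦ merge (P k) r

lemma mk_mem_boundary : s(u, v) ∈ boundary H U ↔ H.Adj u v ∧ ¬ (u ∈ U ↔ v ∈ U) := by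
  simp only [boundary, mem_filter_univ]
  constructor
  · rintro ⟨a, ha, b, hb, hab, h⟩
    rcases Sym2.eq_iff.mp h with ⟨rfl, rfl⟩ | ⟨rfl, rfl⟩
    · exact ⟨hab, by tauto⟩
    · exact ⟨hab.symm, by tauto⟩
  · rintro ⟨huv, h⟩
    by_cases hu : u ∈ U
    · exact ⟨u, hu, v, by tauto, huv, rfl⟩
    · exact ⟨v, by tauto, u, hu, huv.symm, Sym2.eq_swap⟩

lemma mem_classOf : u ∈ classOf r v ↔ r u v := by simp [classOf]

lemma mem_classOf_self (r : Setoid V) (v : V) : v ∈ classOf r v := mem_classOf.mpr (r.refl' v)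

lemma classOf_eq_iff : classOf r u = classOf r v ↔ r u v := by
  refine ⟨fun h ↦ mem_classOf.mp (h ▸ mem_classOf_self r u), fun h ↦ ?_⟩
  ext w
  rw [mem_classOf, mem_classOf]
  exact ⟨fun hw ↦ r.trans' hw h, fun hw ↦ r.trans' hw (r.symm' h)⟩

lemma mem_active {A : Finset V} :
    A ∈ active H r ↔ ∃ a b, H.Adj a b ∧ ¬ r a b ∧ classOf r a = A := by
  simp only [active, mem_image, mem_filter_univ]
  exact ⟨fun ⟨a, ⟨b, hab, hr⟩, hA⟩ ↦ ⟨a, b, hab, hr, hA⟩,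
    fun ⟨a, b, hab, hr, hA⟩ ↦ ⟨a, ⟨b, hab, hr⟩, hA⟩⟩

lemma boundary_nonempty_of_mem_active {A : Finset V} (hA : A ∈ active H r) :
    (boundary H A).Nonempty := by
  obtain ⟨a, b, hab, hr, rfl⟩ := mem_active.mp hA
  refine ⟨s(a, b), mk_mem_boundary.mpr ⟨hab, fun h ↦ hr ?_⟩⟩
  exact r.symm' (mem_classOf.mp (h.mp (mem_classOf_self r a)))

lemma card_active_mem_boundary_le (H : SimpleGraph V) (r : Setoid V) (e : Sym2 V) :
    #{A ∈ active H r | e ∈ boundary H A} ≤ 2 := by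
  induction e using Sym2.ind with
  | _ a b =>
  refine (card_le_card (t := {classOf r a, classOf r b}) fun A hA ↦ ?_).trans card_le_two
  obtain ⟨hA, he⟩ := mem_filter.mp hA
  obtain ⟨w, -, -, -, rfl⟩ := mem_active.mp hA
  have := (mk_mem_boundary.mp he).2
  rw [mem_classOf, mem_classOf] at this
  rw [mem_insert, mem_singleton, eq_comm, classOf_eq_iff, eq_comm, classOf_eq_iff]
  tauto

lemma biUnion_classOf (hr : r ≤ r') (v : V) :
    (classOf r v).biUnion (classOf r') = classOf r' v := by
  ext w
  simp only [mem_biUnion, mem_classOf]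
  exact ⟨fun ⟨_, hv, hw⟩ ↦ r'.trans' hw (hr hv), fun hw ↦ ⟨v, r.refl' v, hw⟩⟩

lemma active_subset_image_biUnion (hr : r ≤ r') :
    active H r' ⊆ (active H r).image fun A ↦ A.biUnion (classOf r') := by
  intro A hA
  obtain ⟨a, b, hab, hr', rfl⟩ := mem_active.mp hA
  exact mem_image.mpr ⟨classOf r a, mem_active.mpr ⟨a, b, hab, fun h ↦ hr' (hr h), rfl⟩,
    biUnion_classOf hr a⟩

lemma two_mul_card_active_add_card_le (hr : r ≤ r') {S : Finset (Finset V)} (hS : S ⊆ active H r)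
    (h : ∀ A ∈ S, ∃ u v, s(u, v) ∈ boundary H A ∧ r' u v) :
    2 * #(active H r') + #S ≤ 2 * #(active H r) := by
  refine (Nat.add_le_add_right (Nat.mul_le_mul_left 2 <|
    card_le_card (active_subset_image_biUnion hr)) _).trans <|
    two_mul_card_image_add_card_le hS fun A hA ↦ ?_
  obtain ⟨u, v, huv, hu, hv, hr'⟩ : ∃ u v, H.Adj u v ∧ u ∈ A ∧ v ∉ A ∧ r' u v := by
    obtain ⟨u, v, he, hr'⟩ := h A hA
    obtain ⟨huv, hA⟩ := mk_mem_boundary.mp he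
    by_cases hu : u ∈ A
    · exact ⟨u, v, huv, hu, by tauto, hr'⟩
    · exact ⟨v, u, huv.symm, by tauto, hu, r'.symm' hr'⟩
  obtain ⟨w, -, -, -, rfl⟩ := mem_active.mp (hS hA)
  rw [mem_classOf] at hu hv
  have hvu : ¬ r v u := fun h ↦ hv (r.trans' h hu)
  refine ⟨classOf r v, mem_active.mpr ⟨v, u, huv.symm, hvu, rfl⟩, fun h ↦ hv (classOf_eq_iff.mp h),
    ?_⟩
  rw [biUnion_classOf hr, biUnion_classOf hr, classOf_eq_iff]
  exact r'.trans' (r'.symm' hr') (hr hu)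

lemma card_active_le (H : SimpleGraph V) (r : Setoid V) : #(active H r) ≤ Fintype.card V :=
  card_image_le.trans (card_le_univ _)

lemma card_active_anti (hr : r ≤ r') : #(active H r') ≤ #(active H r) :=
  (card_le_card (active_subset_image_biUnion hr)).trans card_image_le

lemma le_merge (P : Finset V → Sym2 V → Prop) (r : Setoid V) : r ≤ merge P r := le_sup_left

lemma merge_rel {P : Finset V → Sym2 V → Prop} {w : V} (h : P (classOf r w) s(u, v)) :
    merge P r u v :=
  (le_sup_right : _ ≤ merge P r) (Relation.EqvGen.rel u v ⟨w, h⟩)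

lemma merge_le {P : Finset V → Sym2 V → Prop} (hr : r ≤ r')
    (h : ∀ w u v, P (classOf r w) s(u, v) → r' u v) : merge P r ≤ r' :=
  sup_le hr <| Setoid.eqvGen_le fun u v ⟨w, huv⟩ ↦ h w u v huv

section

variable {R : ℕ} {P P' : Fin R → Finset V → Sym2 V → Prop} {r₀ : Setoid V}

lemma boruvka_succ (P : Fin R → Finset V → Sym2 V → Prop) (r₀ : Setoid V) (k : Fin R) :
    boruvka P r₀ k.succ = merge (P k) (boruvka P r₀ k.castSucc) :=
  Fin.induction_succ ..

lemma boruvka_congr (i : Fin (R + 1)) (h : ∀ k : Fin R, k.castSucc < i → ∀ w e,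
    P k (classOf (boruvka P r₀ k.castSucc) w) e ↔ P' k (classOf (boruvka P r₀ k.castSucc) w) e) :
    boruvka P r₀ i = boruvka P' r₀ i := by
  induction i using Fin.induction with
  | zero => rfl
  | succ k ih =>
    have hk := h k k.castSucc_lt_succ
    rw [boruvka_succ, boruvka_succ, ← ih fun l hl ↦ h l (hl.trans k.castSucc_lt_succ)]
    simp only [merge, hk]

lemma le_boruvka (P : Fin R → Finset V → Sym2 V → Prop) (r₀ : Setoid V) (i : Fin (R + 1)) :
    r₀ ≤ boruvka P r₀ i := by
  induction i using Fin.induction with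
  | zero => exact le_rfl
  | succ k ih => exact boruvka_succ P r₀ k ▸ ih.trans (le_merge _ _)

lemma boruvka_le (hr₀ : r₀ ≤ r) (h : ∀ k A u v, P k A s(u, v) → r u v) (i : Fin (R + 1)) :
    boruvka P r₀ i ≤ r := by
  induction i using Fin.induction with
  | zero => exact hr₀
  | succ k ih => exact boruvka_succ P r₀ k ▸ merge_le ih fun w u v ↦ h k _ u v

end

end Boruvka

section BoruvkaSampling

variable {V : Type*} [Fintype V] {H : SimpleGraph V} {L R : ℕ}

/-- Along each class boundary, select the edges isolated by the subsampling given by `ω`. -/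
def IsolatesBoundary (H : SimpleGraph V) (ω : Sym2 V → Fin (2 ^ L)) (A : Finset V) :
    Sym2 V → Prop :=
  Isolates ω (boundary H A)

/-- Borůvka's algorithm using the edges isolated by the subsampling `x k` in round `k`. -/
noncomputable def samplingRun (H : SimpleGraph V) (x : Fin R → Sym2 V → Fin (2 ^ L))
    (r₀ : Setoid V) : Fin (R + 1) → Setoid V :=
  boruvka (fun k ↦ IsolatesBoundary H (x k)) r₀

lemma IsolatesBoundary.mem_boundary {ω : Sym2 V → Fin (2 ^ L)} {A : Finset V} {e : Sym2 V}
    (h : IsolatesBoundary H ω A e) : e ∈ boundary H A := by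
  obtain ⟨j, -, hj⟩ := h
  exact sample_subset ω j _ (hj ▸ mem_singleton_self e)

lemma card_active_merge_le (ω : Sym2 V → Fin (2 ^ L)) (r : Setoid V) :
    2 * #(active H (merge (IsolatesBoundary H ω) r)) +
      #{A ∈ active H r | ∃ e, Isolates ω (boundary H A) e} ≤ 2 * #(active H r) := by
  refine two_mul_card_active_add_card_le (le_merge _ _) (filter_subset _ _) fun A hA ↦ ?_
  obtain ⟨hA, e, he⟩ := mem_filter.mp hA
  obtain ⟨w, -, -, -, rfl⟩ := mem_active.mp hA
  induction e using Sym2.ind with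
  | _ u v => exact ⟨u, v, IsolatesBoundary.mem_boundary he, merge_rel he⟩

lemma le_of_forall_contract {a : Fin (R + 1) → ℝ} {q T : ℝ} (hq : 0 ≤ q)
    (ha : ∀ k : Fin R, a k.succ ≤ a k.castSucc)
    (hcontract : ∀ k : Fin R, T ≤ a k.castSucc → a k.succ ≤ q * a k.castSucc)
    (hT : q ^ R * a 0 ≤ T) : a (Fin.last R) ≤ T := by
  have invariant (i : Fin (R + 1)) : a i ≤ T ∨ a i ≤ q ^ (i : ℕ) * a 0 := by
    induction i using Fin.induction with
    | zero => simp
    | succ k ih =>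
      rcases lt_or_ge (a k.castSucc) T with hlt | hge
      · exact .inl ((ha k).trans hlt.le)
      · refine ih.imp (ha k).trans fun h ↦ (hcontract k hge).trans ?_
        rw [Fin.val_succ, pow_succ', mul_assoc]
        exact mul_le_mul_of_nonneg_left h hq
  exact (invariant (Fin.last R)).elim id fun h ↦ h.trans (by simpa using hT)

lemma samplingRun_succ (x : Fin R → Sym2 V → Fin (2 ^ L)) (r₀ : Setoid V) (k : Fin R) :
    samplingRun H x r₀ k.succ =
      merge (IsolatesBoundary H (x k)) (samplingRun H x r₀ k.castSucc) :=
  boruvka_succ ..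

lemma samplingRun_update_castSucc (x : Fin R → Sym2 V → Fin (2 ^ L)) (r₀ : Setoid V) (k : Fin R)
    (ω : Sym2 V → Fin (2 ^ L)) :
    samplingRun H (Function.update x k ω) r₀ k.castSucc = samplingRun H x r₀ k.castSucc :=
  boruvka_congr _ fun l hl w e ↦ by
    rw [Function.update_of_ne (Fin.castSucc_lt_castSucc_iff.mp hl).ne]

variable [DecidableEq V]

lemma prob_lt_card_active_merge_le (hL : 2 * Fintype.card (Sym2 V) ≤ 2 ^ L) (r : Setoid V) (T : ℝ) :
    prob (fun ω : Sym2 V → Fin (2 ^ L) ↦ T ≤ #(active H r) ∧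
      (1 - isolationRate / 2) * #(active H r) < #(active H (merge (IsolatesBoundary H ω) r))) ≤
      2 * 2 ^ (-(isolationRate * T)) := by
  by_cases hT : T ≤ #(active H r)
  · calc _ ≤ prob (fun ω : Sym2 V → Fin (2 ^ L) ↦
          (#{A ∈ active H r | ∃ e, Isolates ω (boundary H A) e} : ℝ) <
            isolationRate * #(active H r)) := prob_mono fun ω ⟨_, hω⟩ ↦ by
          have : (2 * #(active H (merge (IsolatesBoundary H ω) r)) +
              #{A ∈ active H r | ∃ e, Isolates ω (boundary H A) e} : ℝ) ≤ 2 * #(active H r) := by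
            exact_mod_cast card_active_merge_le ω r
          linarith [hω]
      _ ≤ 2 * 2 ^ (-(isolationRate * #(active H r))) :=
          prob_few_isolates_le (fun A ↦ boundary_nonempty_of_mem_active)
            (fun e ↦ by convert card_active_mem_boundary_le H r e)
            fun A _ ↦ (Nat.mul_le_mul_left 2 (card_le_univ _)).trans hL
      _ ≤ 2 * 2 ^ (-(isolationRate * T)) := by
          gcongr
          · exact one_le_two
          · exact isolationRate_pos.le
  · rw [prob_of_forall_not fun ω hω ↦ hT hω.1]
    positivity

lemma prob_lt_card_active_samplingRun_le (hL : 2 * Fintype.card (Sym2 V) ≤ 2 ^ L) (r₀ : Setoid V)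
    {T : ℝ} (hT : (1 - isolationRate / 2) ^ R * #(active H r₀) ≤ T) :
    prob (fun x : Fin R → Sym2 V → Fin (2 ^ L) ↦
      T < #(active H (samplingRun H x r₀ (Fin.last R)))) ≤
      R * (2 * 2 ^ (-(isolationRate * T))) := by
  let Fails (k : Fin R) (x : Fin R → Sym2 V → Fin (2 ^ L)) : Prop :=
    T ≤ #(active H (samplingRun H x r₀ k.castSucc)) ∧
      (1 - isolationRate / 2) * #(active H (samplingRun H x r₀ k.castSucc)) <
        #(active H (samplingRun H x r₀ k.succ))
  have prob_fails_le (k : Fin R) : prob (Fails k) ≤ 2 * 2 ^ (-(isolationRate * T)) :=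
    prob_le_of_forall_update k _ fun x ↦ by
      refine (prob_mono fun ω hω ↦ ?_).trans
        (prob_lt_card_active_merge_le (H := H) hL (samplingRun H x r₀ k.castSucc) T)
      simpa only [Fails, samplingRun_succ, samplingRun_update_castSucc, Function.update_self]
        using hω
  have exists_fails (x : Fin R → Sym2 V → Fin (2 ^ L))
      (hx : T < #(active H (samplingRun H x r₀ (Fin.last R)))) : ∃ k ∈ univ, Fails k x := by
    by_contra! h
    refine hx.not_ge <| le_of_forall_contract (a := fun i ↦ #(active H (samplingRun H x r₀ i)))
      (sub_nonneg.mpr (by linarith [isolationRate_le_one])) (fun k ↦ ?_)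
      (fun k hk ↦ not_lt.mp fun hlt ↦ h k (mem_univ k) ⟨hk, hlt⟩) hT
    exact_mod_cast card_active_anti (samplingRun_succ x r₀ k ▸ le_merge _ _)
  simpa using (prob_mono exists_fails).trans (prob_exists_le univ Fails fun k _ ↦ prob_fails_le k)

end BoruvkaSampling

section Fingerprint

open Polynomial

variable {E K : Type*} [Finite E]

/-- The fingerprint of `e` at the evaluation point `z`: distinct elements have distinct powers of
`z`, so that fingerprints of sets of elements are evaluations of distinct polynomials. -/
noncomputable def fingerprint [Monoid K] (z : K) (e : E) : K := z ^ (Finite.equivFin E e : ℕ)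

variable [Field K]

lemma sum_X_pow_equivFin_injective :
    Function.Injective fun S : Finset E ↦ ∑ e ∈ S, (X : K[X]) ^ (Finite.equivFin E e : ℕ) := by
  have coeff_sum (S : Finset E) (e : E) :
      (∑ e' ∈ S, (X : K[X]) ^ (Finite.equivFin E e' : ℕ)).coeff (Finite.equivFin E e) =
        if e ∈ S then 1 else 0 := by
    simp [finsetSum_coeff, coeff_X_pow, Fin.val_inj]
  intro S S' h
  ext e
  have := congrArg (fun p ↦ p.coeff (Finite.equivFin E e)) h
  simp only [coeff_sum] at this
  split_ifs at this <;> simp_all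

variable [Fintype K]

lemma prob_sum_fingerprint_eq_le {S S' : Finset E} (h : S ≠ S') :
    prob (fun z : K ↦ ∑ e ∈ S, fingerprint z e = ∑ e ∈ S', fingerprint z e) ≤
      (Nat.card E / Fintype.card K : ℝ) := by
  let q (S : Finset E) : K[X] := ∑ e ∈ S, X ^ (Finite.equivFin E e : ℕ)
  have eval_q (S : Finset E) (z : K) : (q S).eval z = ∑ e ∈ S, fingerprint z e := by
    simp [q, eval_finsetSum, fingerprint]
  have natDegree_q_le (S : Finset E) : (q S).natDegree ≤ Nat.card E :=
    natDegree_sum_le_of_forall_le _ _ fun e _ ↦ by simp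
  have hq : q S - q S' ≠ 0 := sub_ne_zero.mpr fun hS ↦ h (sum_X_pow_equivFin_injective hS)
  rw [prob_eq_card_div]
  gcongr
  calc _ ≤ #(q S - q S').roots.toFinset := card_le_card fun z hz ↦ by
        rw [Multiset.mem_toFinset, mem_roots hq, IsRoot, eval_sub, eval_q, eval_q,
          (mem_filter.mp hz).2, sub_self]
    _ ≤ (q S - q S').natDegree := (Multiset.toFinset_card_le _).trans (card_roots' _)
    _ ≤ Nat.card E :=
        (natDegree_sub_le _ _).trans (max_le (natDegree_q_le S) (natDegree_q_le S'))

lemma prob_exists_sum_fingerprint_eq_le {ι : Type*} [Fintype ι] (W : ι → Finset E) :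
    prob (fun z : K ↦ ∃ i e, W i ≠ {e} ∧ ∑ e' ∈ W i, fingerprint z e' = fingerprint z e) ≤
      Fintype.card ι * Nat.card E * (Nat.card E / Fintype.card K) := by
  cases nonempty_fintype E
  let Collides (p : ι × E) (z : K) : Prop :=
    W p.1 ≠ {p.2} ∧ ∑ e ∈ W p.1, fingerprint z e = fingerprint z p.2
  calc _ ≤ prob fun z ↦ ∃ p ∈ univ, Collides p z :=
        prob_mono fun z ⟨i, e, h⟩ ↦ ⟨(i, e), mem_univ _, h⟩
    _ ≤ #(univ : Finset (ι × E)) * (Nat.card E / Fintype.card K) := by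
        refine prob_exists_le _ _ fun p _ ↦ ?_
        by_cases hp : W p.1 = {p.2}
        · rw [prob_of_forall_not fun z hz ↦ hz.1 hp]
          positivity
        · exact (prob_mono fun z hz ↦ by simpa using hz.2).trans (prob_sum_fingerprint_eq_le hp)
    _ = _ := by simp

end Fingerprint

section Checksum

variable {E A : Type*} [Fintype E] [DecidableEq E] [AddCommGroup A] [Fintype A]

lemma prob_sum_eq_zero_le {S : Finset E} (hS : S.Nonempty) :
    prob (fun y : E → A ↦ ∑ e ∈ S, y e = 0) ≤ 1 / Fintype.card A := by
  obtain ⟨e₀, he₀⟩ := hS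
  refine prob_le_of_forall_update e₀ _ fun y ↦ ?_
  rw [prob_eq_card_div]
  gcongr
  have sum_update (a : A) :
      ∑ e ∈ S, Function.update y e₀ a e = a + ∑ e ∈ S \ {e₀}, y e :=
    sum_update_of_mem he₀ y a
  simp only [sum_update]
  have card_le_one : #{a : A | a + ∑ e ∈ S \ {e₀}, y e = 0} ≤ 1 := by
    rw [card_le_one]
    exact fun a ha b hb ↦
      add_right_cancel (((mem_filter_univ a).mp ha).trans ((mem_filter_univ b).mp hb).symm)
  exact_mod_cast card_le_one

lemma prob_exists_sum_eq_zero_le (𝒮 : Finset (Finset E)) :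
    prob (fun y : E → A ↦ ∃ S ∈ 𝒮, S.Nonempty ∧ ∑ e ∈ S, y e = 0) ≤ #𝒮 / Fintype.card A := by
  rw [← mul_one_div]
  refine prob_exists_le 𝒮 _ fun S _ ↦ ?_
  by_cases hS : S.Nonempty
  · exact (prob_mono fun y hy ↦ hy.2).trans (prob_sum_eq_zero_le hS)
  · rw [prob_of_forall_not fun y hy ↦ hS hy.1]
    positivity

end Checksum

section Saturated

variable {V : Type*} {H : SimpleGraph V} {r r' : Setoid V} {U : Finset V}

/-- `U` is a union of classes of `r`. -/
def Saturated (r : Setoid V) (U : Finset V) : Prop := ∀ ⦃u v⦄, r u v → u ∈ U → v ∈ U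

lemma Saturated.anti (hr : r ≤ r') (hU : Saturated r' U) : Saturated r U :=
  fun _ _ huv ↦ hU (hr huv)

variable [Fintype V]

lemma saturated_classOf (r : Setoid V) (v : V) : Saturated r (classOf r v) := fun _ _ huw hu ↦
  mem_classOf.mpr (r.trans' (r.symm' huw) (mem_classOf.mp hu))

lemma boundary_eq_empty_iff : boundary H U = ∅ ↔ Saturated H.reachableSetoid U := by
  constructor
  · rintro h u v ⟨p⟩ hu
    induction p with
    | nil => exact hu
    | @cons u w v huw _ ih =>
      refine ih (by_contra fun hw ↦ ?_)
      exact notMem_empty s(u, w) (h ▸ mk_mem_boundary.mpr ⟨huw, by tauto⟩)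
  · refine fun h ↦ eq_empty_of_forall_notMem fun e ↦ ?_
    induction e using Sym2.ind with
    | _ u v =>
      intro he
      obtain ⟨huv, he⟩ := mk_mem_boundary.mp he
      exact he ⟨h huv.reachable, h huv.symm.reachable⟩

lemma boundary_biUnion_active (hU : Saturated r U) :
    boundary H ({A ∈ active H r | A ⊆ U}.biUnion id) = boundary H U := by
  have mem_biUnion_iff {a b : V} (hab : H.Adj a b) (hr : ¬ r a b) :
      a ∈ {A ∈ active H r | A ⊆ U}.biUnion id ↔ a ∈ U := by
    simp only [mem_biUnion, mem_filter, id]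
    refine ⟨fun ⟨A, hA, ha⟩ ↦ hA.2 ha, fun ha ↦ ⟨classOf r a, ⟨?_, fun w hw ↦ ?_⟩, ?_⟩⟩
    · exact mem_active.mpr ⟨a, b, hab, hr, rfl⟩
    · exact hU (r.symm' (mem_classOf.mp hw)) ha
    · exact mem_classOf_self r a
  have saturated_biUnion : Saturated r ({A ∈ active H r | A ⊆ U}.biUnion id) := by
    intro a b hab ha
    obtain ⟨A, hA, ha⟩ := mem_biUnion.mp ha
    obtain ⟨w, -, -, -, rfl⟩ := mem_active.mp (mem_filter.mp hA).1
    exact mem_biUnion.mpr ⟨_, hA, saturated_classOf r w hab ha⟩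
  ext e
  induction e using Sym2.ind with
  | _ a b =>
  rw [mk_mem_boundary, mk_mem_boundary]
  refine and_congr_right fun hab ↦ not_congr ?_
  by_cases hr : r a b
  · exact iff_of_true ⟨(saturated_biUnion hr ·), (saturated_biUnion (r.symm' hr) ·)⟩
      ⟨(hU hr ·), (hU (r.symm' hr) ·)⟩
  · rw [mem_biUnion_iff hab hr, mem_biUnion_iff hab.symm fun h ↦ hr (r.symm' h)]

lemma exists_finset_boundary_mem : ∃ 𝒮 : Finset (Finset (Sym2 V)),
    (∀ ⦃U⦄, Saturated r U → boundary H U ∈ 𝒮) ∧ #𝒮 ≤ 2 ^ #(active H r) :=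
  ⟨(active H r).powerset.image fun N ↦ boundary H (N.biUnion id), fun _ hU ↦ mem_image.mpr
    ⟨_, mem_powerset.mpr (filter_subset _ _), boundary_biUnion_active hU⟩,
    card_image_le.trans (card_powerset _).le⟩

end Saturated

section Seeds

variable {V K A : Type*} [Fintype V] [Field K] [AddCommGroup A] {L R : ℕ} {H : SimpleGraph V}
  {r₀ : Setoid V} {x : Fin R → Sym2 V → Fin (2 ^ L)} {z : K} {y : Sym2 V → A}

/-- The random bits of a labeling: a subsampling of the edges for each of the `R` rounds, an
evaluation point for fingerprints, and checksums of the edges. -/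
abbrev Seed (V K A : Type*) (L R : ℕ) : Type _ :=
  (Fin R → Sym2 V → Fin (2 ^ L)) × K × (Sym2 V → A)

/-- The random bits lead to no false positive: in all rounds of the Borůvka run from `r₀`, only
singleton samples look like singletons, and the checksum detects the nonempty boundaries of unions
of classes of the final partition. -/
structure Seed.IsGood (H : SimpleGraph V) (r₀ : Setoid V) (ω : Seed V K A L R) : Prop where
  eq_singleton (k : Fin R) (w : V) (j : Fin L) (e : Sym2 V)
    (h : ∑ e' ∈ sample (ω.1 k) j (boundary H (classOf (samplingRun H ω.1 r₀ k.castSucc) w)),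
      fingerprint ω.2.1 e' = fingerprint ω.2.1 e) :
    sample (ω.1 k) j (boundary H (classOf (samplingRun H ω.1 r₀ k.castSucc) w)) = {e}
  boundary_eq_empty (U : Finset V) (hU : Saturated (samplingRun H ω.1 r₀ (Fin.last R)) U)
    (h : ∑ e ∈ boundary H U, ω.2.2 e = 0) : boundary H U = ∅

variable [DecidableEq V] [Fintype K] [Fintype A]

lemma prob_exists_boundary_checksum_eq_zero_le {r : Setoid V} {T : ℕ} (hT : #(active H r) ≤ T) :
    prob (fun y : Sym2 V → A ↦
      ∃ U, Saturated r U ∧ boundary H U ≠ ∅ ∧ ∑ e ∈ boundary H U, y e = 0) ≤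
      2 ^ T / Fintype.card A := by
  obtain ⟨𝒮, mem_𝒮, card_le⟩ := exists_finset_boundary_mem (H := H) (r := r)
  calc _ ≤ prob (fun y : Sym2 V → A ↦ ∃ S ∈ 𝒮, S.Nonempty ∧ ∑ e ∈ S, y e = 0) :=
        prob_mono fun y ⟨U, hU, hne, hy⟩ ↦ ⟨_, mem_𝒮 hU, nonempty_iff_ne_empty.mpr hne, hy⟩
    _ ≤ #𝒮 / Fintype.card A := prob_exists_sum_eq_zero_le 𝒮
    _ ≤ 2 ^ T / Fintype.card A := by
        gcongr
        exact_mod_cast card_le.trans (Nat.pow_le_pow_right two_pos hT)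

lemma prob_not_isGood_le (hL : 2 * Fintype.card (Sym2 V) ≤ 2 ^ L) {T : ℕ}
    (hT : (1 - isolationRate / 2) ^ R * #(active H r₀) ≤ (T : ℝ)) :
    prob (fun ω : Seed V K A L R ↦ ¬ ω.IsGood H r₀) ≤
      R * (2 * 2 ^ (-(isolationRate * T))) +
      (R * Fintype.card V * L * Nat.card (Sym2 V) * (Nat.card (Sym2 V) / Fintype.card K) +
      2 ^ T / Fintype.card A) := by
  let boundarySample (x : Fin R → Sym2 V → Fin (2 ^ L)) (p : Fin R × V × Fin L) :=
    sample (x p.1) p.2.2 (boundary H (classOf (samplingRun H x r₀ p.1.castSucc) p.2.1))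
  let ManyActive (ω : Seed V K A L R) : Prop :=
    (T : ℝ) < #(active H (samplingRun H ω.1 r₀ (Fin.last R)))
  let Collides (x : Fin R → Sym2 V → Fin (2 ^ L)) (z : K) : Prop :=
    ∃ p e, boundarySample x p ≠ {e} ∧ ∑ e' ∈ boundarySample x p, fingerprint z e' = fingerprint z e
  let Misses (x : Fin R → Sym2 V → Fin (2 ^ L)) (y : Sym2 V → A) : Prop :=
    ∃ U, Saturated (samplingRun H x r₀ (Fin.last R)) U ∧ boundary H U ≠ ∅ ∧
      ∑ e ∈ boundary H U, y e = 0
  have cover (ω : Seed V K A L R) (hω : ¬ ω.IsGood H r₀) :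
      ManyActive ω ∨ Collides ω.1 ω.2.1 ∨ (¬ ManyActive ω ∧ Misses ω.1 ω.2.2) := by
    contrapose! hω
    exact ⟨fun k w j e h ↦ by_contra fun hne ↦ hω.2.1 ⟨(k, w, j), e, hne, h⟩,
      fun U hU h ↦ by_contra fun hne ↦ hω.2.2 hω.1 ⟨U, hU, hne, h⟩⟩
  refine (prob_mono cover).trans <| (prob_or_le _ _).trans <| add_le_add ?_ <|
    (prob_or_le _ _).trans <| add_le_add (prob_le_of_forall_fst _ fun x ↦ ?_)
      (prob_le_of_forall_fst _ fun x ↦ ?_)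
  · exact (prob_comp_fst _).trans_le (prob_lt_card_active_samplingRun_le hL r₀ hT)
  · refine (prob_comp_fst (Collides x)).trans_le <|
      (prob_exists_sum_fingerprint_eq_le (boundarySample x)).trans_eq ?_
    simp [mul_assoc]
  · by_cases hx : (T : ℝ) < #(active H (samplingRun H x r₀ (Fin.last R)))
    · rw [prob_of_forall_not fun _ h ↦ h.1 hx]
      positivity
    · refine (prob_mono fun p h ↦ h.2).trans <| (prob_comp_snd (Misses x)).trans_le ?_
      exact prob_exists_boundary_checksum_eq_zero_le (by exact_mod_cast not_lt.mp hx)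

end Seeds

section Sketch

variable {V K A : Type*} [Field K] [AddCommGroup A] {L R : ℕ}

/-- The linear sketch of a set of edges: for each round and each level of subsampling, the sum of
the fingerprints of the surviving edges, and the sum of the checksums of all edges. -/
abbrev Sketch (K A : Type*) (L R : ℕ) : Type _ := (Fin R → Fin L → K) × A

/-- The sketch of a single edge. -/
noncomputable def Seed.edgeSketch [Finite V] (ω : Seed V K A L R) (e : Sym2 V) : Sketch K A L R :=
  (fun k j ↦ if (ω.1 k e : ℕ) < 2 ^ (j : ℕ) then fingerprint ω.2.1 e else 0, ω.2.2 e)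

lemma sum_edgeSketch_fst [Finite V] (ω : Seed V K A L R) (W : Finset (Sym2 V)) (k : Fin R)
    (j : Fin L) :
    (∑ e ∈ W, ω.edgeSketch e).1 k j = ∑ e ∈ sample (ω.1 k) j W, fingerprint ω.2.1 e := by
  rw [Prod.fst_sum, Finset.sum_apply, Finset.sum_apply, sample, sum_filter]
  rfl

lemma sum_edgeSketch_snd [Finite V] (ω : Seed V K A L R) (W : Finset (Sym2 V)) :
    (∑ e ∈ W, ω.edgeSketch e).2 = ∑ e ∈ W, ω.2.2 e :=
  Prod.snd_sum

variable [Fintype V]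

/-- The Borůvka run that can be computed from the sketches `sk U` of the boundaries of the unions
`U` of classes of `r₀`. -/
noncomputable def sketchRun (sk : Finset V → Sketch K A L R) (z : K) (r₀ : Setoid V) :
    Fin (R + 1) → Setoid V :=
  boruvka (fun k U e ↦ ∃ j, (sk U).1 k j = fingerprint z e) r₀

/-- The decoder's verdict on connectivity of `s` and `t`: the final checksums rule out that some
union of classes separating `s` from `t` has an empty boundary. -/
def SketchConnected (sk : Finset V → Sketch K A L R) (z : K) (r₀ : Setoid V) (s t : V) : Prop :=
  ∀ U, Saturated (sketchRun sk z r₀ (Fin.last R)) U → s ∈ U → t ∉ U → (sk U).2 ≠ 0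

variable {H : SimpleGraph V} {r₀ : Setoid V} {ω : Seed V K A L R} {sk : Finset V → Sketch K A L R}

lemma sketchRun_eq_samplingRun (hω : ω.IsGood H r₀)
    (hsk : ∀ U, Saturated r₀ U → sk U = ∑ e ∈ boundary H U, ω.edgeSketch e) (i : Fin (R + 1)) :
    sketchRun sk ω.2.1 r₀ i = samplingRun H ω.1 r₀ i := by
  refine (boruvka_congr i fun k _ w e ↦ ?_).symm
  rw [hsk _ ((saturated_classOf _ w).anti (le_boruvka _ r₀ _))]
  simp only [sum_edgeSketch_fst]
  constructor
  · rintro ⟨j, hj, h⟩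
    exact ⟨⟨j, hj⟩, by rw [h, sum_singleton]⟩
  · rintro ⟨j, h⟩
    exact ⟨j, j.2, hω.eq_singleton k w j e h⟩

lemma samplingRun_le_reachableSetoid (hr₀ : r₀ ≤ H.reachableSetoid)
    (x : Fin R → Sym2 V → Fin (2 ^ L)) (i : Fin (R + 1)) :
    samplingRun H x r₀ i ≤ H.reachableSetoid :=
  boruvka_le hr₀ (fun _ _ _ _ h ↦ (mk_mem_boundary.mp h.mem_boundary).1.reachable) i

theorem sketchConnected_iff_reachable (hr₀ : r₀ ≤ H.reachableSetoid) (hω : ω.IsGood H r₀)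
    (hsk : ∀ U, Saturated r₀ U → sk U = ∑ e ∈ boundary H U, ω.edgeSketch e) (s t : V) :
    SketchConnected sk ω.2.1 r₀ s t ↔ H.Reachable s t := by
  have checksum_eq {U : Finset V} (hU : Saturated (samplingRun H ω.1 r₀ (Fin.last R)) U) :
      (sk U).2 = ∑ e ∈ boundary H U, ω.2.2 e := by
    rw [hsk U (hU.anti (le_boruvka _ r₀ _)), sum_edgeSketch_snd]
  rw [SketchConnected, sketchRun_eq_samplingRun hω hsk]
  constructor
  · intro h
    by_contra hst
    have hU := saturated_classOf H.reachableSetoid s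
    have hU' := hU.anti (samplingRun_le_reachableSetoid hr₀ ω.1 (Fin.last R))
    refine h _ hU' (mem_classOf_self _ s) (fun ht ↦ hst (mem_classOf.mp ht).symm) ?_
    rw [checksum_eq hU', boundary_eq_empty_iff.mpr hU, sum_empty]
  · intro hst U hU hs ht h0
    rw [checksum_eq hU] at h0
    exact ht (boundary_eq_empty_iff.mp (hω.boundary_eq_empty U hU h0) hst hs)

end Sketch

section Intervals

variable {n : ℕ} {S : Type*} [AddCommGroup S]

/-- The partition of `Fin n` into intervals that is obtained by cutting just after each element
of `B`. -/
def intervals (B : Finset (Fin n)) : Setoid (Fin n) where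
  r u v := ∀ b ∈ B, u ≤ b ↔ v ≤ b
  iseqv := ⟨fun _ _ _ ↦ Iff.rfl, fun h b hb ↦ (h b hb).symm,
    fun h h' b hb ↦ (h b hb).trans (h' b hb)⟩

/-- The difference of the values of the indicator function of `U` at `b` and at `b + 1`, where the
indicator function is extended by zero. -/
noncomputable def jump (U : Finset (Fin n)) (b : Fin n) : ℤ :=
  (if (b : ℕ) ∈ U.map Fin.valEmbedding then 1 else 0) -
    if (b + 1 : ℕ) ∈ U.map Fin.valEmbedding then 1 else 0

lemma sum_sub_smul_sum_Iic {g : ℕ → ℤ} (hg : g n = 0) (q : Fin n → S) :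
    ∑ b : Fin n, (g b - g (b + 1)) • ∑ v ∈ Iic b, q v = ∑ v : Fin n, g v • q v := by
  have telescope (v : Fin n) : ∑ b ∈ Ici v, (g b - g (b + 1)) = g v := by
    calc ∑ b ∈ Ici v, (g b - g (b + 1)) = ∑ i ∈ Ico (v : ℕ) n, (g i - g (i + 1)) := by
          rw [← Fin.map_valEmbedding_Ici, sum_map]
          rfl
      _ = -∑ i ∈ Ico (v : ℕ) n, (g (i + 1) - g i) := by simp only [← sum_neg_distrib, neg_sub]
      _ = g v := by rw [sum_Ico_sub _ v.2.le, hg, zero_sub, neg_neg]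
  simp only [smul_sum]
  rw [sum_comm' (t' := univ) (s' := Ici) (by simp)]
  simp only [← sum_smul, telescope]

lemma jump_eq_zero {B U : Finset (Fin n)} (hU : Saturated (intervals B) U) {b : Fin n} (hb : b ∉ B)
    (hlt : (b + 1 : ℕ) < n) : jump U b = 0 := by
  have hrel : intervals B b ⟨b + 1, hlt⟩ := fun c hc ↦ by
    have : (b : ℕ) ≠ c := fun h ↦ hb (Fin.ext h ▸ hc)
    simp only [Fin.le_def]
    omega
  have hmem : b ∈ U ↔ ⟨b + 1, hlt⟩ ∈ U := ⟨(hU hrel ·), (hU ((intervals B).symm' hrel) ·)⟩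
  simp [jump, Fin.exists_iff, hmem, hlt]

lemma sum_jump_smul_sum_Iic {q : Fin n → S} (hq : ∑ v, q v = 0) {B U : Finset (Fin n)}
    (hU : Saturated (intervals B) U) :
    ∑ b ∈ B, jump U b • ∑ v ∈ Iic b, q v = ∑ v ∈ U, q v := by
  calc ∑ b ∈ B, jump U b • ∑ v ∈ Iic b, q v = ∑ b, jump U b • ∑ v ∈ Iic b, q v := by
        refine sum_subset (subset_univ B) fun b _ hb ↦ ?_
        by_cases hlt : (b + 1 : ℕ) < n
        · rw [jump_eq_zero hU hb hlt, zero_smul]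
        · have : Iic b = univ := eq_univ_of_forall fun v ↦ mem_Iic.mpr (Fin.le_def.mpr (by omega))
          rw [this, hq, smul_zero]
    _ = ∑ v : Fin n, (if (v : ℕ) ∈ U.map Fin.valEmbedding then 1 else 0 : ℤ) • q v :=
        sum_sub_smul_sum_Iic (g := fun i ↦ if i ∈ U.map Fin.valEmbedding then 1 else 0)
          (by simp [Fin.is_lt, Nat.ne_of_lt]) q
    _ = ∑ v ∈ U, q v := by simp [← Fin.ext_iff]

lemma card_active_le_card_image {V β : Type*} [Fintype V] [DecidableEq β] {H : SimpleGraph V}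
    {r : Setoid V} (g : V → β) (hg : ∀ u v, g u = g v → r u v) :
    #(active H r) ≤ #(univ.image g) := by
  obtain ⟨h, hh⟩ := (Function.factorsThrough_iff _).mp
    (show (classOf r).FactorsThrough g from fun u v huv ↦ classOf_eq_iff.mpr (hg u v huv))
  rw [active, hh, ← image_image]
  exact card_image_le.trans (card_le_card (image_subset_image (subset_univ _)))

lemma card_active_intervals_le (H : SimpleGraph (Fin n)) (B : Finset (Fin n)) :
    #(active H (intervals B)) ≤ #B + 1 := by
  let nextCut (v : Fin n) : WithTop (Fin n) := {b ∈ B | v ≤ b}.min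
  have nextCut_le_iff (v : Fin n) {b : Fin n} (hb : b ∈ B) : nextCut v ≤ b ↔ v ≤ b := by
    refine ⟨fun h ↦ ?_, fun h ↦ min_le (mem_filter.mpr ⟨hb, h⟩)⟩
    obtain ⟨c, hc⟩ := WithTop.ne_top_iff_exists.mp (h.trans_lt (WithTop.coe_lt_top b)).ne
    have : v ≤ c := (mem_filter.mp (mem_of_min hc.symm)).2
    exact this.trans (WithTop.coe_le_coe.mp (hc ▸ h))
  refine (card_active_le_card_image nextCut fun u v huv b hb ↦ ?_).trans <|
    (card_le_card (t := insert ⊤ (B.image WithTop.some)) ?_).trans <|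
    (card_insert_le _ _).trans (Nat.add_le_add_right card_image_le 1)
  · rw [← nextCut_le_iff u hb, huv, nextCut_le_iff v hb]
  refine image_subset_iff.mpr fun v _ ↦ mem_insert.mpr ?_
  rcases h : nextCut v with _ | c
  · exact .inl rfl
  · exact .inr (mem_image_of_mem _ (mem_filter.mp (mem_of_min h)).1)

end Intervals

section EdgeLabels

variable {V S : Type*} [Fintype V] [AddCommGroup S] {H : SimpleGraph V}

/-- The sketch of the edges at the vertex `v`, for edge sketches `σ`. -/
noncomputable def vertexSketch (H : SimpleGraph V) (σ : Sym2 V → S) (v : V) : S :=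
  ∑ e with e ∈ H.incidenceSet v, σ e

lemma sum_vertexSketch_eq_sum_boundary [Module (ZMod 2) S] (H : SimpleGraph V) (σ : Sym2 V → S)
    (U : Finset V) : ∑ v ∈ U, vertexSketch H σ v = ∑ e ∈ boundary H U, σ e := by
  simp only [vertexSketch, sum_filter]
  rw [sum_comm, ← univ_inter (boundary H U), ← sum_ite_mem]
  refine sum_congr rfl fun e _ ↦ ?_
  induction e using Sym2.ind with
  | _ a b =>
  by_cases hab : H.Adj a b
  · have endpoint (v : V) : (if s(a, b) ∈ H.incidenceSet v then σ s(a, b) else 0) =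
        (if v = a then σ s(a, b) else 0) + (if v = b then σ s(a, b) else 0) := by
      have hne := hab.ne
      have hmem : s(a, b) ∈ H.incidenceSet v ↔ v = a ∨ v = b := by
        simp [SimpleGraph.mk'_mem_incidenceSet_iff, hab]
      by_cases ha : v = a <;> by_cases hb : v = b <;> simp_all
    simp only [endpoint, sum_add_distrib, sum_ite_eq', mk_mem_boundary]
    by_cases ha : a ∈ U <;> by_cases hb : b ∈ U <;> simp [hab, ha, hb, ZModModule.add_self]
  · simp [SimpleGraph.mk'_mem_incidenceSet_iff, mk_mem_boundary, hab]

lemma boundary_univ (H : SimpleGraph V) : boundary H univ = ∅ := by simp [boundary]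

lemma sum_boundary_deleteEdges {F : Finset (Sym2 V)} (hF : (F : Set (Sym2 V)) ⊆ H.edgeSet)
    (σ : Sym2 V → S) (U : Finset V) :
    ∑ e ∈ boundary (H.deleteEdges F) U, σ e =
      ∑ e ∈ boundary H U, σ e - ∑ e ∈ F with e ∈ boundary ⊤ U, σ e := by
  have filter_eq : {e ∈ boundary H U | e ∈ F} = {e ∈ F | e ∈ boundary ⊤ U} := by
    ext e
    induction e using Sym2.ind with
    | _ a b =>
      simp only [mem_filter, mk_mem_boundary, SimpleGraph.top_adj]
      exact ⟨fun h ↦ ⟨h.2, h.1.1.ne, h.1.2⟩, fun h ↦ ⟨⟨hF h.1, h.2.2⟩, h.1⟩⟩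
  have filter_not_eq : {e ∈ boundary H U | e ∉ F} = boundary (H.deleteEdges F) U := by
    ext e
    induction e using Sym2.ind with
    | _ a b =>
      simp only [mem_filter, mk_mem_boundary, SimpleGraph.deleteEdges_adj, mem_coe]
      tauto
  rw [← sum_filter_add_sum_filter_not (boundary H U) (· ∈ F), filter_eq, filter_not_eq,
    add_sub_cancel_left]

variable {n : ℕ} {H : SimpleGraph (Fin n)} {σ : Sym2 (Fin n) → S}
  {cut : Sym2 (Fin n) → Fin 2 → Fin n} {F : Finset (Sym2 (Fin n))}

/-- The labels of the edges: an edge and its sketch, together with two positions at which the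
deletion of the edge may disconnect the graph and the sketches of the initial segments they
bound. -/
abbrev EdgeLabel (n : ℕ) (S : Type*) : Type _ := (Sym2 (Fin n) × S) × (Fin 2 → Fin n × S)

/-- The sketch of the edges between `{0, …, b}` and its complement, as a sum of vertex sketches. -/
noncomputable def prefixSketch (H : SimpleGraph (Fin n)) (σ : Sym2 (Fin n) → S) (b : Fin n) : S :=
  ∑ v ∈ Iic b, vertexSketch H σ v

/-- The label of the edge `e` with cut positions `cut e`. -/
noncomputable def edgeLabel (H : SimpleGraph (Fin n)) (σ : Sym2 (Fin n) → S)
    (cut : Sym2 (Fin n) → Fin 2 → Fin n) (e : Sym2 (Fin n)) : EdgeLabel n S :=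
  ((e, σ e), fun k ↦ (cut e k, prefixSketch H σ (cut e k)))

/-- The cut positions contributed by the edges in `F`. -/
noncomputable def cuts (cut : Sym2 (Fin n) → Fin 2 → Fin n) (F : Finset (Sym2 (Fin n))) :
    Finset (Fin n) :=
  F.biUnion fun e ↦ univ.image (cut e)

/-- The cut positions with their prefix sketches that are recorded in the edge labels `T`. -/
noncomputable def labelCuts (T : Finset (EdgeLabel n S)) : Finset (Fin n × S) :=
  T.biUnion fun l ↦ univ.image l.2

/-- The sketch of the boundary of `U` after deletion of the edges with labels in `T`, provided that
`U` is a union of intervals between the cuts. -/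
noncomputable def labelSketch (T : Finset (EdgeLabel n S)) (U : Finset (Fin n)) : S :=
  ∑ p ∈ labelCuts T, jump U p.1 • p.2 - ∑ p ∈ T.image Prod.fst with p.1 ∈ boundary ⊤ U, p.2

lemma card_cuts_le : #(cuts cut F) ≤ 2 * #F := by
  rw [mul_comm]
  exact card_biUnion_le_card_mul _ _ _ fun e _ ↦ card_image_le.trans (by simp)

lemma labelCuts_image_edgeLabel [DecidableEq (EdgeLabel n S)] :
    labelCuts (F.image (edgeLabel H σ cut)) =
      (cuts cut F).image fun b ↦ (b, prefixSketch H σ b) := by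
  simp [labelCuts, cuts, edgeLabel, image_biUnion, biUnion_image, image_image, Function.comp_def]

lemma image_fst_labelCuts_image_edgeLabel [DecidableEq (EdgeLabel n S)] :
    (labelCuts (F.image (edgeLabel H σ cut))).image Prod.fst = cuts cut F := by
  simp [labelCuts_image_edgeLabel, image_image, Function.comp_def]

lemma labelSketch_image_edgeLabel [Module (ZMod 2) S] [DecidableEq (EdgeLabel n S)]
    (hF : (F : Set (Sym2 (Fin n))) ⊆ H.edgeSet)
    {U : Finset (Fin n)} (hU : Saturated (intervals (cuts cut F)) U) :
    labelSketch (F.image (edgeLabel H σ cut)) U =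
      ∑ e ∈ boundary (H.deleteEdges F) U, σ e := by
  have sum_cuts : ∑ p ∈ labelCuts (F.image (edgeLabel H σ cut)), jump U p.1 • p.2 =
      ∑ e ∈ boundary H U, σ e := by
    rw [labelCuts_image_edgeLabel, sum_image fun b _ c _ h ↦ (Prod.ext_iff.mp h).1,
      ← sum_vertexSketch_eq_sum_boundary, ← sum_jump_smul_sum_Iic _ hU]
    · rfl
    · rw [sum_vertexSketch_eq_sum_boundary, boundary_univ, sum_empty]
  have sum_edges : ∑ p ∈ (F.image (edgeLabel H σ cut)).image Prod.fst with p.1 ∈ boundary ⊤ U, p.2 =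
      ∑ e ∈ F with e ∈ boundary ⊤ U, σ e := by
    rw [image_image, sum_filter, sum_filter, sum_image fun d _ e _ h ↦ congrArg Prod.fst h]
    rfl
  rw [labelSketch, sum_cuts, sum_edges, sum_boundary_deleteEdges hF]
  congr!

end EdgeLabels

section Decoder

variable {n L R : ℕ} {K A : Type*} [Field K] [AddCommGroup A]

/-- The decoder's verdict on the connectivity of `s` and `t` after the deletion of the edges with
labels in `T`, where `z` is the evaluation point for fingerprints. -/
def LabelConnected (z : K) (s t : Fin n) (T : Finset (EdgeLabel n (Sketch K A L R))) : Prop :=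
  SketchConnected (labelSketch T) z (intervals ((labelCuts T).image Prod.fst)) s t

lemma labelConnected_iff_reachable [Algebra (ZMod 2) K] [Module (ZMod 2) A]
    [DecidableEq (EdgeLabel n (Sketch K A L R))]
    {H : SimpleGraph (Fin n)} {cut : Sym2 (Fin n) → Fin 2 → Fin n} {F : Finset (Sym2 (Fin n))}
    (hF : (F : Set (Sym2 (Fin n))) ⊆ H.edgeSet)
    (hcut : intervals (cuts cut F) ≤ (H.deleteEdges F).reachableSetoid)
    {ω : Seed (Fin n) K A L R} (hω : ω.IsGood (H.deleteEdges F) (intervals (cuts cut F)))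
    (s t : Fin n) :
    LabelConnected ω.2.1 s t (F.image (edgeLabel H ω.edgeSketch cut)) ↔
      (H.deleteEdges F).Reachable s t := by
  rw [LabelConnected, image_fst_labelCuts_image_edgeLabel]
  exact sketchConnected_iff_reachable hcut hω (fun U ↦ labelSketch_image_edgeLabel hF) s t

end Decoder

section Tour

variable {V : Type*} {G : SimpleGraph V}

lemma exists_walk_insert_support {r u v : V} (w : G.Walk r r) (hw : w.darts.Nodup)
    (hu : u ∈ w.support) (hv : v ∉ w.support) (huv : G.Adj u v) :
    ∃ w' : G.Walk r r, w'.darts.Nodup ∧ v ∈ w'.support ∧ w.support ⊆ w'.support := by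
  obtain ⟨p, q, rfl⟩ := SimpleGraph.Walk.mem_support_iff_exists_append.mp hu
  refine ⟨p.append (.cons huv (.cons huv.symm q)), ?_, by simp, fun x hx ↦ ?_⟩
  · rw [SimpleGraph.Walk.darts_append] at hw
    have notMem_of_mem {d : G.Dart} (hd : d ∈ p.darts ++ q.darts) : d.fst ≠ v ∧ d.snd ≠ v := by
      rw [← SimpleGraph.Walk.darts_append] at hd
      exact ⟨fun h ↦ hv (h ▸ SimpleGraph.Walk.dart_fst_mem_support_of_mem_darts _ hd),
        fun h ↦ hv (h ▸ SimpleGraph.Walk.dart_snd_mem_support_of_mem_darts _ hd)⟩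
    have hne : (⟨(u, v), huv⟩ : G.Dart) ≠ ⟨(v, u), huv.symm⟩ := by simp [huv.ne]
    simp only [SimpleGraph.Walk.darts_append, SimpleGraph.Walk.darts_cons]
    rw [List.perm_middle.nodup_iff, List.nodup_cons, List.perm_middle.mem_iff,
      List.perm_middle.nodup_iff, List.nodup_cons, List.mem_cons, not_or]
    exact ⟨⟨hne, fun h ↦ (notMem_of_mem h).2 rfl⟩, fun h ↦ (notMem_of_mem h).1 rfl, hw⟩
  · rw [SimpleGraph.Walk.mem_support_append_iff] at hx ⊢
    exact hx.imp_right fun h ↦ by simp [h]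

lemma exists_walk_nodup_darts_forall_mem_support [Finite V] (hG : G.Connected) (r : V) :
    ∃ w : G.Walk r r, w.darts.Nodup ∧ ∀ v, v ∈ w.support := by
  obtain ⟨w, hw, hmax⟩ := exists_maximalFor_of_wellFoundedGT (fun w : G.Walk r r ↦ w.darts.Nodup)
    (fun w ↦ {v | v ∈ w.support}) ⟨.nil, by simp⟩
  refine ⟨w, hw, fun v ↦ by_contra fun hv ↦ ?_⟩
  obtain ⟨p⟩ := hG.preconnected r v
  obtain ⟨d, -, hfst, hsnd⟩ := p.exists_boundary_dart {x | x ∈ w.support} (by simp) hv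
  obtain ⟨w', hw', hmem, hsub⟩ := exists_walk_insert_support w hw hfst hsnd d.adj
  exact hsnd (hmax hw' hsub hmem)

/-- A closed walk through all vertices of a graph on `Fin n` that uses every dart at most once and
first visits the vertices in their order; `pos v` is the time of the first visit of `v`. -/
structure OrderedTour {n : ℕ} (H : SimpleGraph (Fin n)) where
  root : Fin n
  walk : H.Walk root root
  nodup_darts : walk.darts.Nodup
  pos : Fin n → ℕ
  pos_le (v : Fin n) : pos v ≤ walk.length
  getVert_pos (v : Fin n) : walk.getVert (pos v) = v
  pos_le_pos ⦃u v : Fin n⦄ (huv : u ≤ v) : pos u ≤ pos v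

lemma exists_equiv_fin_monotone [Fintype V] {n : ℕ} (hn : Fintype.card V = n) (f : V → ℕ)
    (hf : f.Injective) : ∃ φ : V ≃ Fin n, Monotone (f ∘ φ.symm) := by
  let _ : LinearOrder V := LinearOrder.lift' f hf
  exact ⟨(Fintype.orderIsoFinOfCardEq V hn).symm.toEquiv,
    fun u v huv ↦ (Fintype.orderIsoFinOfCardEq V hn).monotone huv⟩

lemma exists_iso_orderedTour [Fintype V] {n : ℕ} (hn : Fintype.card V = n) (hG : G.Connected) :
    ∃ H : SimpleGraph (Fin n), Nonempty (G ≃g H) ∧ Nonempty (OrderedTour H) := by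
  obtain ⟨r⟩ := hG.nonempty
  obtain ⟨w, hw, hsupp⟩ := exists_walk_nodup_darts_forall_mem_support hG r
  choose pos getVert_pos pos_le using fun v ↦
    SimpleGraph.Walk.mem_support_iff_exists_getVert.mp (hsupp v)
  obtain ⟨φ, hφ⟩ := exists_equiv_fin_monotone hn pos
    (Function.LeftInverse.injective (g := w.getVert) getVert_pos)
  let iso := SimpleGraph.Iso.map φ G
  refine ⟨_, ⟨iso⟩, ⟨⟨iso.toHom r, w.map iso.toHom, ?_, pos ∘ φ.symm, fun v ↦ ?_, fun v ↦ ?_, hφ⟩⟩⟩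
  · rw [SimpleGraph.Walk.darts_map]
    refine hw.map fun d d' h ↦ SimpleGraph.Dart.ext _ _ ?_
    exact φ.injective.prodMap φ.injective (congrArg SimpleGraph.Dart.toProd h)
  · simpa using pos_le (φ.symm v)
  · rw [SimpleGraph.Walk.getVert_map, Function.comp_apply, getVert_pos]
    exact φ.apply_symm_apply v

variable {n : ℕ} {H : SimpleGraph (Fin n)}

namespace OrderedTour

variable (τ : OrderedTour H)

lemma exists_le_iff_pos_le {u : Fin n} {i : ℕ} (hu : τ.pos u ≤ i) :
    ∃ c : Fin n, ∀ v, v ≤ c ↔ τ.pos v ≤ i := by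
  obtain ⟨c, hc, hmax⟩ := exists_max_image {v | τ.pos v ≤ i} id ⟨u, by simpa using hu⟩
  simp only [mem_filter_univ, id] at hc hmax
  exact ⟨c, fun v ↦ ⟨fun h ↦ (τ.pos_le_pos h).trans hc, hmax v⟩⟩

lemma exists_cut : ∃ cut : Sym2 (Fin n) → Fin 2 → Fin n, ∀ i < τ.walk.length, ∀ u, τ.pos u ≤ i →
    ∃ k, ∀ v, v ≤ cut s(τ.walk.getVert i, τ.walk.getVert (i + 1)) k ↔ τ.pos v ≤ i := by
  have : Nonempty (Fin n) := ⟨τ.root⟩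
  choose! c hc using fun i (h : ∃ u, τ.pos u ≤ i) ↦ τ.exists_le_iff_pos_le h.choose_spec
  let dartCut (p : Fin n × Fin n) : Fin n := c ((τ.walk.darts.map (·.toProd)).idxOf p)
  have dartCut_getVert {i : ℕ} (hi : i < τ.walk.length) :
      dartCut (τ.walk.getVert i, τ.walk.getVert (i + 1)) = c i := by
    have hnodup : (τ.walk.darts.map (·.toProd)).Nodup :=
      τ.nodup_darts.map fun d d' h ↦ SimpleGraph.Dart.ext _ _ h
    have hi' : i < (τ.walk.darts.map (·.toProd)).length := by simpa using hi
    have hget : (τ.walk.darts.map (·.toProd))[i] = (τ.walk.getVert i, τ.walk.getVert (i + 1)) := by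
      simp [SimpleGraph.Walk.darts_getElem_eq_getVert]
    rw [← hget]
    exact congrArg c (hnodup.idxOf_getElem i hi')
  refine ⟨fun e ↦ ![dartCut (Quot.out e), dartCut (Quot.out e).swap], fun i hi u hu ↦ ?_⟩
  have hcut := hc i ⟨u, hu⟩
  rw [← dartCut_getVert hi] at hcut
  have hout := Quot.out_eq s(τ.walk.getVert i, τ.walk.getVert (i + 1))
  rcases (Sym2.mk_eq_mk_iff (p := Quot.out _) (q := (_, _))).mp hout with h | h
  · exact ⟨0, fun v ↦ by simpa [h] using hcut v⟩
  · exact ⟨1, fun v ↦ by simpa [h] using hcut v⟩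

lemma exists_forall_intervals_le (τ : OrderedTour H) : ∃ cut : Sym2 (Fin n) → Fin 2 → Fin n,
    ∀ F : Finset (Sym2 (Fin n)), intervals (cuts cut F) ≤ (H.deleteEdges F).reachableSetoid := by
  obtain ⟨cut, hcut⟩ := τ.exists_cut
  refine ⟨cut, fun F ↦ ?_⟩
  have of_le {u v : Fin n} (hle : u ≤ v) (huv : intervals (cuts cut F) u v) :
      (H.deleteEdges F).Reachable u v := by
    suffices ∀ i, τ.pos u ≤ i → i ≤ τ.pos v → (H.deleteEdges F).Reachable u (τ.walk.getVert i) by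
      simpa only [τ.getVert_pos] using this (τ.pos v) (τ.pos_le_pos hle) le_rfl
    intro i hui
    induction i, hui using Nat.le_induction with
    | base => exact fun _ ↦ by rw [τ.getVert_pos]
    | succ i hui ih =>
      intro hiv
      have hi : i < τ.walk.length := hiv.trans (τ.pos_le v)
      refine (ih (Nat.le_of_succ_le hiv)).trans (SimpleGraph.Adj.reachable ?_)
      rw [SimpleGraph.deleteEdges_adj]
      refine ⟨τ.walk.adj_getVert_succ hi, fun hF ↦ (Nat.not_le.mpr hiv) ?_⟩
      obtain ⟨k, hk⟩ := hcut i hi u hui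
      have hmem : cut _ k ∈ cuts cut F :=
        mem_biUnion.mpr ⟨_, hF, mem_image_of_mem (cut _) (mem_univ k)⟩
      rwa [← hk v, ← huv _ hmem, hk u]
  intro u v huv
  rcases le_total u v with hle | hle
  · exact of_le hle huv
  · exact (of_le hle ((intervals _).symm' huv)).symm

end OrderedTour

end Tour

section Augmentation

variable {V : Type*} (G : SimpleGraph V)

/-- The representative of the connected component of `v`. -/
noncomputable def componentRep (v : V) : V :=
  (G.connectedComponentMk v).out

/-- The connected graph obtained from `G` by joining all component representatives pairwise. -/
noncomputable def joinComponents : SimpleGraph V :=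
  G ⊔ SimpleGraph.fromRel fun u v ↦ componentRep G u = u ∧ componentRep G v = v

lemma reachable_componentRep (v : V) : G.Reachable (componentRep G v) v :=
  SimpleGraph.ConnectedComponent.exact (Quot.out_eq _)

variable {G} {u v s t : V} {F : Set (Sym2 V)}

lemma componentRep_eq_iff : componentRep G u = componentRep G v ↔ G.Reachable u v := by
  refine ⟨fun h ↦ (reachable_componentRep G u).symm.trans (h ▸ reachable_componentRep G v),
    fun h ↦ ?_⟩
  rw [componentRep, SimpleGraph.ConnectedComponent.sound h, componentRep]

lemma connected_joinComponents [Nonempty V] : (joinComponents G).Connected := by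
  have hle : G ≤ joinComponents G := le_sup_left
  have rep_rep (v : V) : componentRep G (componentRep G v) = componentRep G v :=
    componentRep_eq_iff.mpr (reachable_componentRep G v)
  refine ⟨fun u v ↦ ((reachable_componentRep G u).symm.mono hle).trans <|
    SimpleGraph.Reachable.trans ?_ ((reachable_componentRep G v).mono hle)⟩
  by_cases h : componentRep G u = componentRep G v
  · rw [h]
  · exact SimpleGraph.Adj.reachable (.inr ⟨h, .inl ⟨rep_rep u, rep_rep v⟩⟩)

-- A walk in the augmented graph is retracted to the component of `s` by sending all other vertices
-- to the representative of that component.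
lemma reachable_deleteEdges_of_joinComponents (hst : G.Reachable s t)
    (h : ((joinComponents G).deleteEdges F).Reachable s t) : (G.deleteEdges F).Reachable s t := by
  let retract (v : V) : V := if G.Reachable v s then v else componentRep G s
  have retract_rep {v : V} (hv : componentRep G v = v) : retract v = componentRep G s := by
    by_cases hvs : G.Reachable v s
    · rw [← componentRep_eq_iff.mpr hvs, hv]
      exact if_pos hvs
    · exact if_neg hvs
  have retract_adj {u v : V} (huv : ((joinComponents G).deleteEdges F).Adj u v) :
      (G.deleteEdges F).Reachable (retract u) (retract v) := by
    obtain ⟨hG | ⟨-, hrep⟩, hF⟩ := SimpleGraph.deleteEdges_adj.mp huv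
    · by_cases hus : G.Reachable u s
      · have hvs : G.Reachable v s := hG.symm.reachable.trans hus
        simp only [retract, if_pos hus, if_pos hvs]
        exact (SimpleGraph.deleteEdges_adj.mpr ⟨hG, hF⟩).reachable
      · have hvs : ¬ G.Reachable v s := fun hvs ↦ hus (hG.reachable.trans hvs)
        simp only [retract, if_neg hus, if_neg hvs, SimpleGraph.Reachable.refl]
    · have hrep' : componentRep G u = u ∧ componentRep G v = v := hrep.elim id And.symm
      rw [retract_rep hrep'.1, retract_rep hrep'.2]
  have retract_reachable {u v : V} (w : ((joinComponents G).deleteEdges F).Walk u v) :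
      (G.deleteEdges F).Reachable (retract u) (retract v) := by
    induction w with
    | nil => rfl
    | cons huv _ ih => exact (retract_adj huv).trans ih
  obtain ⟨w⟩ := h
  simpa only [retract, if_pos hst.symm, if_pos (SimpleGraph.Reachable.refl s)]
    using retract_reachable w

lemma reachable_deleteEdges_iff_joinComponents :
    (G.deleteEdges F).Reachable s t ↔ componentRep G s = componentRep G t ∧
      ((joinComponents G).deleteEdges F).Reachable s t := by
  rw [componentRep_eq_iff]
  exact ⟨fun h ↦ ⟨h.mono (SimpleGraph.deleteEdges_le F),
      h.mono (SimpleGraph.deleteEdges_mono le_sup_left)⟩,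
    fun h ↦ reachable_deleteEdges_of_joinComponents h.1 h.2⟩

end Augmentation

section Isomorphism

variable {V W : Type*} {G : SimpleGraph V} {H : SimpleGraph W} (φ : G ≃g H)

lemma reachable_deleteEdges_iso_iff {F : Set (Sym2 V)} {s t : V} :
    (H.deleteEdges (Sym2.map φ '' F)).Reachable (φ s) (φ t) ↔ (G.deleteEdges F).Reachable s t := by
  let ψ : G.deleteEdges F ≃g H.deleteEdges (Sym2.map φ '' F) :=
    ⟨φ.toEquiv, fun {u v} ↦ by
      rw [SimpleGraph.deleteEdges_adj, SimpleGraph.deleteEdges_adj]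
      exact and_congr φ.map_adj_iff
        (not_congr ((Sym2.map.injective φ.injective).mem_set_image (a := s(u, v))))⟩
  exact ψ.reachable_iff

lemma image_map_iso_subset_edgeSet {F : Set (Sym2 V)} (hF : F ⊆ G.edgeSet) :
    Sym2.map φ '' F ⊆ H.edgeSet := by
  rintro _ ⟨e, he, rfl⟩
  exact φ.map_mem_edgeSet_iff.mpr (hF he)

end Isomorphism

section Reduction

variable {V : Type*} [Fintype V] [Nonempty V] {n : ℕ}

lemma exists_orderedTour_reachable_iff (hn : Fintype.card V = n) (G : SimpleGraph V) :
    ∃ (H : SimpleGraph (Fin n)) (φ : V ≃ Fin n), Nonempty (OrderedTour H) ∧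
      ∀ F ⊆ G.edgeSet, Sym2.map φ '' F ⊆ H.edgeSet ∧ ∀ s t, (G.deleteEdges F).Reachable s t ↔
        componentRep G s = componentRep G t ∧
          (H.deleteEdges (Sym2.map φ '' F)).Reachable (φ s) (φ t) := by
  obtain ⟨H, ⟨φ⟩, hτ⟩ := exists_iso_orderedTour hn (connected_joinComponents (G := G))
  have edgeSet_subset : G.edgeSet ⊆ (joinComponents G).edgeSet :=
    SimpleGraph.edgeSet_mono le_sup_left
  refine ⟨H, φ.toEquiv, hτ, fun F hF ↦
    ⟨image_map_iso_subset_edgeSet φ (hF.trans edgeSet_subset), fun s t ↦ ?_⟩⟩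
  rw [reachable_deleteEdges_iff_joinComponents]
  exact and_congr_right' (reachable_deleteEdges_iso_iff φ).symm

end Reduction

section Labeling

variable {V α β Ω : Type*} [Fintype Ω]

/-- The labels `lv ω`, `le ω`, for `ω` uniform in `Ω`, allow `D` to answer each connectivity query
for `G` with at most `f` faulty edges correctly, except with probability at most `ε`. -/
def IsLabeling (D : α → α → Finset β → Prop) (f : ℕ) (ε : ℝ) (G : SimpleGraph V)
    (lv : Ω → V → α) (le : Ω → Sym2 V → β) : Prop :=
  ∀ (s t : V) (F : Finset (Sym2 V)), (F : Set (Sym2 V)) ⊆ G.edgeSet → #F ≤ f →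
    prob (fun ω ↦ ¬ (D (lv ω s) (lv ω t) (F.image (le ω)) ↔ (G.deleteEdges F).Reachable s t)) ≤ ε

/-- An `f`-edge-fault connectivity labeling scheme for the graphs on `Fin n`, with `bV` bits per
vertex label, `bE` bits per edge label and failure probability at most `ε` for each query. -/
def HasLabelingScheme (n f bV bE : ℕ) (ε : ℝ) : Prop :=
  ∃ D : (Fin bV → Bool) → (Fin bV → Bool) → Finset (Fin bE → Bool) → Bool,
    ∀ G : SimpleGraph (Fin n), ∃ (N : ℕ) (μ : Fin N → ℝ) (LV : Fin N → Fin n → Fin bV → Bool)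
      (LE : Fin N → Sym2 (Fin n) → Fin bE → Bool), (∀ ω, 0 ≤ μ ω) ∧ ∑ ω, μ ω = 1 ∧
      ∀ (s t : Fin n) (F : Finset (Sym2 (Fin n))), (F : Set (Sym2 (Fin n))) ⊆ G.edgeSet → #F ≤ f →
        1 - ε ≤ ∑ ω with (D (LV ω s) (LV ω t) (F.image (LE ω)) = true ↔
          (G.deleteEdges F).Reachable s t), μ ω

lemma exists_leftInverse_bits [Fintype α] [Nonempty α] {b : ℕ} (h : Fintype.card α ≤ 2 ^ b) :
    ∃ (enc : α → Fin b → Bool) (dec : (Fin b → Bool) → α), Function.LeftInverse dec enc := by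
  obtain ⟨enc⟩ := Function.Embedding.nonempty_of_card_le
    (show Fintype.card α ≤ Fintype.card (Fin b → Bool) by simpa using h)
  exact ⟨enc, Function.invFun enc, Function.leftInverse_invFun enc.injective⟩

lemma hasLabelingScheme_of_isLabeling [Nonempty Ω] [Fintype α] [Nonempty α] [Fintype β] [Nonempty β]
    {n f bV bE : ℕ} {ε : ℝ} (hV : Fintype.card α ≤ 2 ^ bV) (hE : Fintype.card β ≤ 2 ^ bE)
    (D : α → α → Finset β → Prop)
    (h : ∀ G : SimpleGraph (Fin n), ∃ (lv : Ω → Fin n → α) (le : Ω → Sym2 (Fin n) → β),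
      IsLabeling D f ε G lv le) :
    HasLabelingScheme n f bV bE ε := by
  obtain ⟨encV, decV, hdecV⟩ := exists_leftInverse_bits hV
  obtain ⟨encE, decE, hdecE⟩ := exists_leftInverse_bits hE
  refine ⟨fun p q T ↦ decide (D (decV p) (decV q) (T.image decE)), fun G ↦ ?_⟩
  obtain ⟨lv, le, hlabel⟩ := h G
  let φ := (Fintype.equivFin Ω).symm
  refine ⟨Fintype.card Ω, fun _ ↦ 1 / Fintype.card Ω, fun ω v ↦ encV (lv (φ ω) v),
    fun ω e ↦ encE (le (φ ω) e), fun _ ↦ by positivity, by simp, fun s t F hF hf ↦ ?_⟩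
  have decode_image (ω : Ω) : (F.image fun e ↦ encE (le ω e)).image decE = F.image (le ω) := by
    rw [image_image]
    exact image_congr fun e _ ↦ hdecE _
  simp only [hdecV _, decode_image, decide_eq_true_eq]
  have hfail := hlabel s t F hF hf
  rw [prob_not, ← prob_comp_equiv φ, prob_eq_card_div, Fintype.card_fin] at hfail
  rw [sum_const, nsmul_eq_mul, mul_one_div]
  linarith

end Labeling

section VertexLabels

variable {V K A : Type*} [Field K] [AddCommGroup A] {n L R : ℕ}

/-- A vertex label: the representative of the component, the number of the vertex along the tour,
and the evaluation point of the fingerprints. -/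
abbrev VertexLabel (V : Type*) (n : ℕ) (K : Type*) : Type _ := V × Fin n × K

/-- The decoder of the labeling scheme, before labels are encoded as bit strings. -/
def QueryConnected (p q : VertexLabel V n K) (T : Finset (EdgeLabel n (Sketch K A L R))) : Prop :=
  p.1 = q.1 ∧ LabelConnected p.2.2 p.2.1 q.2.1 T

/-- The bound on the failure probability of the labels on `n` vertices, where `k` and `a` are the
numbers of fingerprint values and of checksums. -/
noncomputable def failureBound (n k a L R T : ℕ) : ℝ :=
  R * (2 * 2 ^ (-(isolationRate * T))) + (R * n * L * n ^ 2 * (n ^ 2 / k) + 2 ^ T / a)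

lemma card_sym2_le (V : Type*) [Fintype V] : Fintype.card (Sym2 V) ≤ Fintype.card V ^ 2 := by
  rw [sq, ← Fintype.card_prod]
  exact Fintype.card_le_of_surjective _ Quot.mk_surjective

lemma exists_isLabeling [Fintype V] [Nonempty V] [Fintype K] [Algebra (ZMod 2) K] [Fintype A]
    [Module (ZMod 2) A] (hn : Fintype.card V = n) (hL : 2 * n ^ 2 ≤ 2 ^ L) {T f : ℕ}
    (hT : (1 - isolationRate / 2) ^ R * (min (2 * f + 1) n : ℕ) ≤ T) (G : SimpleGraph V) :
    ∃ (lv : Seed (Fin n) K A L R → V → VertexLabel V n K)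
      (le : Seed (Fin n) K A L R → Sym2 V → EdgeLabel n (Sketch K A L R)),
      IsLabeling QueryConnected f (failureBound n (Fintype.card K) (Fintype.card A) L R T)
        G lv le := by
  obtain ⟨H, φ, ⟨τ⟩, hφ⟩ := exists_orderedTour_reachable_iff hn G
  obtain ⟨cut, hcut⟩ := τ.exists_forall_intervals_le
  refine ⟨fun ω v ↦ (componentRep G v, φ v, ω.2.1),
    fun ω e ↦ edgeLabel H ω.edgeSketch cut (Sym2.map φ e), fun s t F hF hf ↦ ?_⟩
  obtain ⟨hsub, hreach⟩ := hφ F hF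
  rw [← coe_image] at hsub hreach
  set F' := F.image (Sym2.map φ)
  have card_active : #(active (H.deleteEdges F') (intervals (cuts cut F'))) ≤ min (2 * f + 1) n :=
    le_min ((card_active_intervals_le _ _).trans <| Nat.add_le_add_right
        (card_cuts_le.trans (Nat.mul_le_mul_left 2 (card_image_le.trans hf))) 1)
      ((card_active_le _ _).trans_eq (Fintype.card_fin n))
  have hT' : (1 - isolationRate / 2) ^ R *
      #(active (H.deleteEdges F') (intervals (cuts cut F'))) ≤ (T : ℝ) :=
    (mul_le_mul_of_nonneg_left (mod_cast card_active)
      (pow_nonneg (by linarith [isolationRate_le_one]) R)).trans hT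
  have hcard : Fintype.card (Sym2 (Fin n)) ≤ n ^ 2 := by simpa using card_sym2_le (Fin n)
  refine (prob_mono fun ω hω ↦ ?_).trans
    ((prob_not_isGood_le (K := K) (A := A) (by omega) hT').trans ?_)
  · refine fun hgood ↦ hω ?_
    rw [QueryConnected, hreach, ← labelConnected_iff_reachable hsub (hcut F') hgood, image_image]
    rfl
  · have hcard' : (Nat.card (Sym2 (Fin n)) : ℝ) ≤ n ^ 2 := by
      rw [Nat.card_eq_fintype_card]
      exact_mod_cast hcard
    rw [failureBound, Fintype.card_fin]
    gcongr

end VertexLabels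

section Parameters

lemma HasLabelingScheme.mono {n f bV bE : ℕ} {ε ε' : ℝ}
    (h : HasLabelingScheme n f bV bE ε) (hε : ε ≤ ε') : HasLabelingScheme n f bV bE ε' := by
  obtain ⟨D, hD⟩ := h
  refine ⟨D, fun G ↦ ?_⟩
  obtain ⟨N, μ, LV, LE, hμ, hsum, hquery⟩ := hD G
  exact ⟨N, μ, LV, LE, hμ, hsum, fun s t F hF hf ↦
    (sub_le_sub_left hε 1).trans (hquery s t F hF hf)⟩

lemma card_vertexLabel_le {V K : Type*} [Fintype V] [Fintype K] {n l m : ℕ}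
    (hV : Fintype.card V ≤ 2 ^ l) (hn : n ≤ 2 ^ l) (hK : Fintype.card K = 2 ^ m) :
    Fintype.card (VertexLabel V n K) ≤ 2 ^ (2 * l + m) := by
  rw [Fintype.card_prod, Fintype.card_prod, Fintype.card_fin, hK]
  calc Fintype.card V * (n * 2 ^ m) ≤ 2 ^ l * (2 ^ l * 2 ^ m) := by gcongr
    _ = 2 ^ (2 * l + m) := by ring

lemma card_edgeLabel_le {S : Type*} [Fintype S] {n l b : ℕ} (hn : n ≤ 2 ^ l)
    (hS : Fintype.card S = 2 ^ b) : Fintype.card (EdgeLabel n S) ≤ 2 ^ (4 * l + 3 * b) := by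
  have hsym : Fintype.card (Sym2 (Fin n)) ≤ n ^ 2 := by simpa using card_sym2_le (Fin n)
  rw [Fintype.card_prod, Fintype.card_prod, Fintype.card_fun, Fintype.card_prod, Fintype.card_fin,
    Fintype.card_fin, hS]
  calc Fintype.card (Sym2 (Fin n)) * 2 ^ b * (n * 2 ^ b) ^ 2
      ≤ (2 ^ l) ^ 2 * 2 ^ b * (2 ^ l * 2 ^ b) ^ 2 := by
        gcongr
        exact hsym.trans (by gcongr)
    _ = 2 ^ (4 * l + 3 * b) := by ring

lemma card_sketch {K A : Type*} [Fintype K] [Fintype A] {L R m B : ℕ}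
    (hK : Fintype.card K = 2 ^ m) (hA : Fintype.card A = 2 ^ B) :
    Fintype.card (Sketch K A L R) = 2 ^ (m * L * R + B) := by
  simp only [Fintype.card_prod, Fintype.card_fun, Fintype.card_fin, hK, hA]
  ring

lemma hasLabelingScheme_failureBound {n f l L R T m B : ℕ} (hn : 0 < n) (hnl : n ≤ 2 ^ l)
    (hm : m ≠ 0) (hL : 2 * l + 1 ≤ L)
    (hT : (1 - isolationRate / 2) ^ R * (min (2 * f + 1) n : ℕ) ≤ T) :
    HasLabelingScheme n f (2 * l + m) (4 * l + 3 * (m * L * R + B))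
      (failureBound n (2 ^ m) (2 ^ B) L R T) := by
  have : NeZero n := ⟨hn.ne'⟩
  let K := GaloisField 2 m
  let A := Fin B → ZMod 2
  let _ : Fintype K := Fintype.ofFinite K
  have hK : Fintype.card K = 2 ^ m := by rw [← Nat.card_eq_fintype_card, GaloisField.card 2 m hm]
  have hA : Fintype.card A = 2 ^ B := by simp [A]
  have hL' : 2 * n ^ 2 ≤ 2 ^ L :=
    calc 2 * n ^ 2 ≤ 2 * (2 ^ l) ^ 2 := by gcongr
      _ = 2 ^ (2 * l + 1) := by ring
      _ ≤ 2 ^ L := Nat.pow_le_pow_right two_pos hL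
  refine hasLabelingScheme_of_isLabeling (Ω := Seed (Fin n) K A L R)
    (card_vertexLabel_le ((Fintype.card_fin n).trans_le hnl) hnl hK)
    (card_edgeLabel_le hnl (card_sketch hK hA)) QueryConnected fun G ↦ ?_
  rw [← hK, ← hA]
  exact exists_isLabeling (Fintype.card_fin n) hL' hT G

lemma isolation_failure_le {R T a d : ℕ} (hR : 6 * R ≤ 2 ^ a)
    (hT : (a + d : ℕ) ≤ isolationRate * T) :
    R * (2 * 2 ^ (-(isolationRate * T))) ≤ (2 ^ d : ℝ)⁻¹ / 3 := by
  have hR' : (R : ℝ) ≤ 2 ^ a / 6 := by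
    rw [le_div_iff₀' (by norm_num)]
    exact_mod_cast hR
  calc (R * (2 * 2 ^ (-(isolationRate * T))) : ℝ)
      ≤ 2 ^ a / 6 * (2 * 2 ^ (-((a + d : ℕ) : ℝ))) := by
        gcongr
        exact one_le_two
    _ = (2 ^ d : ℝ)⁻¹ / 3 := by
        rw [Real.rpow_neg two_pos.le, Real.rpow_natCast, pow_add]
        field_simp
        norm_num

lemma fingerprint_failure_le {n l L R m a d : ℕ} (hn : n ≤ 2 ^ l) (hL : L ≤ 2 ^ (2 * l))
    (hR : 6 * R ≤ 2 ^ a) (hm : a + 7 * l + d ≤ m) :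
    R * n * L * n ^ 2 * (n ^ 2 / (2 ^ m : ℕ)) ≤ (2 ^ d : ℝ)⁻¹ / 6 := by
  have key : 6 * (R * n * L * n ^ 2 * n ^ 2) * 2 ^ d ≤ 2 ^ m :=
    calc 6 * (R * n * L * n ^ 2 * n ^ 2) * 2 ^ d = 6 * R * n * L * n ^ 2 * n ^ 2 * 2 ^ d := by ring
      _ ≤ 2 ^ a * 2 ^ l * 2 ^ (2 * l) * (2 ^ l) ^ 2 * (2 ^ l) ^ 2 * 2 ^ d := by gcongr
      _ = 2 ^ (a + 7 * l + d) := by ring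
      _ ≤ 2 ^ m := Nat.pow_le_pow_right two_pos hm
  rw [← mul_div_assoc, div_le_iff₀ (by positivity), inv_div_left,
    le_inv_mul_iff₀ (by positivity)]
  exact_mod_cast key.trans' (by linarith)

lemma checksum_failure_le {T B d : ℕ} (hB : T + 2 + d ≤ B) :
    2 ^ T / (2 ^ B : ℕ) ≤ (2 ^ d : ℝ)⁻¹ / 4 :=
  calc 2 ^ T / ((2 ^ B : ℕ) : ℝ) ≤ 2 ^ T / 2 ^ (T + 2 + d) := by
        push_cast
        gcongr
        exact one_le_two
    _ = (2 ^ d : ℝ)⁻¹ / 4 := by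
        rw [pow_add, pow_add]
        field_simp
        norm_num

lemma failureBound_le {n l L R T m B a d : ℕ} (hn : n ≤ 2 ^ l) (hL : L ≤ 2 ^ (2 * l))
    (hR : 6 * R ≤ 2 ^ a) (hT : (a + d : ℕ) ≤ isolationRate * T) (hm : a + 7 * l + d ≤ m)
    (hB : T + 2 + d ≤ B) : failureBound n (2 ^ m) (2 ^ B) L R T ≤ (2 ^ d)⁻¹ := by
  have hd : (0 : ℝ) < (2 ^ d)⁻¹ := by positivity
  rw [failureBound]
  linarith [isolation_failure_le hR hT, fingerprint_failure_le hn hL hR hm,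
    checksum_failure_le hB]

lemma exists_pow_isolationRate_le : ∃ k : ℕ, (1 - isolationRate / 2) ^ k ≤ 1 / 2 := by
  have := isolationRate_pos
  obtain ⟨k, hk⟩ := exists_pow_lt_of_lt_one one_half_pos (by linarith : 1 - isolationRate / 2 < 1)
  exact ⟨k, hk.le⟩

lemma pow_isolationRate_mul_le {k ρ l M : ℕ} (hk : (1 - isolationRate / 2) ^ k ≤ 1 / 2)
    (hM : M ≤ 3 * 2 ^ ρ * l ^ 2) :
    (1 - isolationRate / 2) ^ (k * ρ) * M ≤ (3 * l ^ 2 : ℕ) := by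
  have hnonneg : 0 ≤ 1 - isolationRate / 2 := by linarith [isolationRate_le_one]
  calc (1 - isolationRate / 2) ^ (k * ρ) * M
      ≤ (1 / 2) ^ ρ * (3 * 2 ^ ρ * l ^ 2 : ℕ) := by
        rw [pow_mul]
        gcongr
    _ = (3 * l ^ 2 : ℕ) := by
        push_cast
        rw [one_div, inv_pow]
        field_simp

lemma mul_le_two_pow_mul {q ρ l : ℕ} (hρ : 1 ≤ ρ) (hρl : ρ ≤ l) : q * ρ ≤ 2 ^ ((q + 1) * l) :=
  calc q * ρ ≤ 2 ^ q * 2 ^ l := by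
        gcongr
        · exact Nat.lt_two_pow_self.le
        · exact hρl.trans Nat.lt_two_pow_self.le
    _ ≤ 2 ^ (q * l) * 2 ^ l := by
        gcongr
        · exact one_le_two
        · exact Nat.le_mul_of_pos_right q (hρ.trans hρl)
    _ = 2 ^ ((q + 1) * l) := by ring

lemma edgeLabel_length_le {k w c K ρ l : ℕ} (hρ : 1 ≤ ρ) (hl : 1 ≤ l) :
    4 * l + 3 * (w * l * (2 * l + 1) * (k * ρ) + (K * l ^ 2 + 2 + c * l)) ≤
      (4 + 9 * w * k + 3 * (K + 2 + c)) * (ρ * l ^ 2) := by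
  have hsq : l ^ 2 ≤ ρ * l ^ 2 := Nat.le_mul_of_pos_left _ hρ
  have hlin : l ≤ ρ * l ^ 2 := (Nat.le_self_pow two_ne_zero l).trans hsq
  calc 4 * l + 3 * (w * l * (2 * l + 1) * (k * ρ) + (K * l ^ 2 + 2 + c * l))
      ≤ 4 * (ρ * l ^ 2) + 3 * (w * l * (3 * l) * (k * ρ) +
          (K * (ρ * l ^ 2) + 2 * (ρ * l ^ 2) + c * (ρ * l ^ 2))) := by
        gcongr <;> omega
    _ = (4 + 9 * w * k + 3 * (K + 2 + c)) * (ρ * l ^ 2) := by ring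

lemma exists_hasLabelingScheme (c : ℕ) : ∃ C : ℕ, ∀ ⦃n f l ρ : ℕ⦄, 0 < n → n ≤ 2 ^ l → 1 ≤ ρ →
    ρ ≤ l → min (2 * f + 1) n ≤ 3 * 2 ^ ρ * l ^ 2 → ∃ bV ≤ C * l, ∃ bE ≤ C * (ρ * l ^ 2),
      HasLabelingScheme n f bV bE (2 ^ (c * l))⁻¹ := by
  obtain ⟨k, hk⟩ := exists_pow_isolationRate_le
  set q := 6 * k
  obtain ⟨K, hK⟩ := exists_nat_ge ((q + 1 + c : ℕ) / isolationRate)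
  rw [div_le_iff₀' isolationRate_pos] at hK
  set w := q + 8 + c
  refine ⟨(2 + w) + (4 + 9 * w * k + 3 * (K + 3 + 2 + c)), fun n f l ρ hn hnl hρ hρl hmin ↦ ?_⟩
  have hl : 1 ≤ l := hρ.trans hρl
  have hδ := isolationRate_pos
  have hT : (1 - isolationRate / 2) ^ (k * ρ) * (min (2 * f + 1) n : ℕ) ≤ ((K + 3) * l ^ 2 : ℕ) :=
    (pow_isolationRate_mul_le hk hmin).trans (by gcongr; omega)
  have hT' : ((q + 1) * l + c * l : ℕ) ≤ isolationRate * ((K + 3) * l ^ 2 : ℕ) :=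
    calc ((((q + 1) * l + c * l : ℕ)) : ℝ) = (q + 1 + c : ℕ) * (l : ℕ) := by push_cast; ring
      _ ≤ isolationRate * K * (l ^ 2 : ℕ) := by
          gcongr
          exact Nat.le_self_pow two_ne_zero l
      _ ≤ isolationRate * ((K + 3) * l ^ 2 : ℕ) := by
          rw [mul_assoc, ← Nat.cast_mul]
          gcongr
          omega
  have hm : w * l ≠ 0 := by positivity
  have hscheme := (hasLabelingScheme_failureBound (B := (K + 3) * l ^ 2 + 2 + c * l)
    hn hnl hm le_rfl hT).mono <|
    failureBound_le hnl Nat.lt_two_pow_self (a := (q + 1) * l) (d := c * l)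
      (by rw [← mul_assoc]; exact mul_le_two_pow_mul hρ hρl) hT'
      (by simp only [w]; linarith) le_rfl
  refine ⟨_, ?_, _, (edgeLabel_length_le hρ hl).trans ?_, hscheme⟩
  · linarith [Nat.zero_le ((4 + 9 * w * k + 3 * (K + 3 + 2 + c)) * l)]
  · exact Nat.mul_le_mul_right _ (Nat.le_add_left _ _)

lemma logb_le_clog (n : ℕ) : Real.logb 2 n ≤ Nat.clog 2 n := by
  rw [← Real.natCeil_logb_natCast]
  exact Nat.le_ceil _

lemma one_le_logb {x : ℝ} (hx : 2 ≤ x) : 1 ≤ Real.logb 2 x := by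
  rwa [Real.le_logb_iff_rpow_le one_lt_two (by linarith), Real.rpow_one]

lemma clog_le_two_mul_logb {n : ℕ} (hn : 2 ≤ n) : Nat.clog 2 n ≤ 2 * Real.logb 2 n := by
  rw [← Real.natCeil_logb_natCast]
  exact Nat.ceil_le_two_mul (by linarith [one_le_logb (x := n) (mod_cast hn)])

lemma le_two_pow_ceil_logb {x : ℝ} (hx : 0 < x) : x ≤ 2 ^ ⌈Real.logb 2 x⌉₊ := by
  rw [← Real.rpow_natCast, ← Real.logb_le_iff_le_rpow one_lt_two hx]
  exact Nat.le_ceil _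

lemma le_two_pow_mul_sq {x a l : ℝ} (hx : 0 < x) (ha : 0 < a) (hal : a ≤ l) :
    x ≤ 2 ^ ⌈Real.logb 2 (x / a ^ 2)⌉₊ * l ^ 2 :=
  calc x = x / a ^ 2 * a ^ 2 := by field_simp
    _ ≤ 2 ^ ⌈Real.logb 2 (x / a ^ 2)⌉₊ * l ^ 2 := by
        gcongr
        exact le_two_pow_ceil_logb (by positivity)

lemma min_le_two_pow_min_mul_sq {n f l : ℕ} {a : ℝ} (hf : 0 < f) (ha : 1 ≤ a) (hal : a ≤ l)
    (hl : n ≤ 2 ^ l) :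
    min (2 * f + 1) n ≤ 3 * 2 ^ min ⌈Real.logb 2 (f / a ^ 2)⌉₊ l * l ^ 2 := by
  have hl1 : 1 ≤ l := by exact_mod_cast ha.trans hal
  rcases le_total ⌈Real.logb 2 (f / a ^ 2)⌉₊ l with h | h
  · have hf' : f ≤ 2 ^ ⌈Real.logb 2 (f / a ^ 2)⌉₊ * l ^ 2 := by
      exact_mod_cast le_two_pow_mul_sq (x := f) (mod_cast hf) (by linarith) hal
    rw [min_eq_left h]
    exact min_le_of_left_le (by linarith)
  · rw [min_eq_right h]
    refine min_le_of_right_le (hl.trans ?_)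
    rw [mul_right_comm]
    exact Nat.le_mul_of_pos_left _ (by positivity)

lemma inv_two_pow_le_rpow_neg {c : ℝ} {k n l : ℕ} (hc : 0 ≤ c) (hk : c ≤ k) (hn : 0 < n)
    (hl : n ≤ 2 ^ l) : ((2 : ℝ) ^ (k * l))⁻¹ ≤ (n : ℝ) ^ (-c) := by
  rw [Real.rpow_neg n.cast_nonneg]
  refine inv_anti₀ (by positivity) ?_
  calc (n : ℝ) ^ c ≤ (2 ^ l) ^ c := Real.rpow_le_rpow n.cast_nonneg (mod_cast hl) hc
    _ ≤ (2 ^ l) ^ (k : ℝ) := Real.rpow_le_rpow_of_exponent_le (one_le_pow₀ one_le_two) hk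
    _ = 2 ^ (k * l) := by rw [Real.rpow_natCast, ← pow_mul, mul_comm]

end Parameters

end FaultLabeling

/-- Randomized edge-fault connectivity labels with
`O(log n)`-bit vertex labels and `O(log² n · log(f / log² n))`-bit edge labels
for `f ≥ 2 log² n`, answering each fixed query correctly with probability at
least `1 − n^{−c}`. -/
theorem stmt_14 :
    ∀ c : ℝ, 1 ≤ c → ∃ C : ℝ, ∀ n f : ℕ, 2 ≤ n →
      2 * (Real.logb 2 n) ^ 2 ≤ (f : ℝ) →
      ∃ bV bE : ℕ,
        (bV : ℝ) ≤ C * Real.logb 2 n ∧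
        (bE : ℝ) ≤ C * (Real.logb 2 n) ^ 2 *
                      Real.logb 2 ((f : ℝ) / (Real.logb 2 n) ^ 2) ∧
        ∃ D : (Fin bV → Bool) → (Fin bV → Bool) → Finset (Fin bE → Bool) → Bool,
          ∀ G : SimpleGraph (Fin n),
            ∃ (N : ℕ) (μ : Fin N → ℝ)
              (LV : Fin N → Fin n → Fin bV → Bool)
              (LE : Fin N → Sym2 (Fin n) → Fin bE → Bool),
              (∀ ω, 0 ≤ μ ω) ∧ (∑ ω, μ ω = 1) ∧
              ∀ (s t : Fin n) (F : Finset (Sym2 (Fin n))),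
                (↑F : Set (Sym2 (Fin n))) ⊆ G.edgeSet → F.card ≤ f →
                1 - (n : ℝ) ^ (-c) ≤
                  ∑ ω ∈ Finset.univ.filter (fun ω =>
                      (D (LV ω s) (LV ω t) (F.image (LE ω)) = true ↔
                        (G.deleteEdges (↑F : Set (Sym2 (Fin n)))).Reachable s t)),
                    μ ω := by
  intro c hc
  obtain ⟨k, hk⟩ := exists_nat_ge c
  obtain ⟨C, hC⟩ := FaultLabeling.exists_hasLabelingScheme k
  refine ⟨8 * C, fun n f hn hf ↦ ?_⟩
  have ha : 1 ≤ Real.logb 2 n := FaultLabeling.one_le_logb (mod_cast hn)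
  have hr : 1 ≤ Real.logb 2 (f / Real.logb 2 n ^ 2) :=
    FaultLabeling.one_le_logb ((le_div_iff₀ (by positivity)).mpr hf)
  have hla := FaultLabeling.clog_le_two_mul_logb hn
  have hf' : 0 < f := by exact_mod_cast (by positivity : 0 < 2 * Real.logb 2 n ^ 2).trans_le hf
  have hnl : n ≤ 2 ^ Nat.clog 2 n := Nat.le_pow_clog one_lt_two n
  obtain ⟨bV, hbV, bE, hbE, hscheme⟩ := hC (by omega) hnl
    (le_min (Nat.one_le_ceil_iff.mpr (by linarith)) (Nat.clog_pos one_lt_two hn)) (min_le_right _ _)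
    (FaultLabeling.min_le_two_pow_min_mul_sq hf' ha (FaultLabeling.logb_le_clog n) hnl)
  refine ⟨bV, bE, ?_, ?_, hscheme.mono
    (FaultLabeling.inv_two_pow_le_rpow_neg (by linarith) hk (by omega) hnl)⟩
  · calc (bV : ℝ) ≤ C * Nat.clog 2 n := mod_cast hbV
      _ ≤ 8 * C * Real.logb 2 n := by nlinarith [C.cast_nonneg (α := ℝ)]
  · calc (bE : ℝ) ≤ C * (⌈Real.logb 2 (f / Real.logb 2 n ^ 2)⌉₊ * Nat.clog 2 n ^ 2) := by
          refine (Nat.cast_le.mpr hbE).trans ?_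
          push_cast
          gcongr
          exact min_le_left _ _
      _ ≤ C * (2 * Real.logb 2 (f / Real.logb 2 n ^ 2) * (2 * Real.logb 2 n) ^ 2) := by
          gcongr
          exact Nat.ceil_le_two_mul (by linarith)
      _ = 8 * C * Real.logb 2 n ^ 2 * Real.logb 2 (f / Real.logb 2 n ^ 2) := by ring
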